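/- If X is a real Hilbert space, regarded as a pointed metric space with the norm metric and base point 0, then the Lipschitz-free space F(X) has property (V*). -/

import Mathlib

open Filter Topology Metric Set

noncomputable section

/-- A formal series `∑ yₙ` in a normed space `Y` is weakly unconditionally Cauchy (WUC)
if `∑ |⟨φ, yₙ⟩| < ∞` for every continuous linear functional `φ` on `Y`. -/
def IsWUC {Y : Type*} [SeminormedAddCommGroup Y] [NormedSpace ℝ Y] (y : ℕ → Y) : Prop :=
  ∀ φ : Y →L[ℝ] ℝ, Summable fun n => |φ (y n)|

/-- `Γ` is a (V*)-set in `X`: for every WUC series `∑ fₙ` in the dual `X*`,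
`sup_{x ∈ Γ} |⟨x, fₙ⟩| → 0`. -/
def IsVStarSet {X : Type*} [SeminormedAddCommGroup X] [NormedSpace ℝ X] (Γ : Set X) : Prop :=
  ∀ f : ℕ → (X →L[ℝ] ℝ), IsWUC f →
    ∀ ε > (0 : ℝ), ∀ᶠ n in atTop, ∀ x ∈ Γ, |f n x| ≤ ε

/-- `Γ` is relatively weakly compact: its closure in the weak topology is compact. -/
def RelWeaklyCompact {X : Type*} [SeminormedAddCommGroup X] [NormedSpace ℝ X]
    (Γ : Set X) : Prop :=
  IsCompact (closure ((toWeakSpace ℝ X) '' Γ))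

/-- A normed space has Pełczyński's property (V*) if every (V*)-set is relatively
weakly compact. -/
def HasPropertyVStar (X : Type*) [SeminormedAddCommGroup X] [NormedSpace ℝ X] : Prop :=
  ∀ Γ : Set X, IsVStarSet Γ → RelWeaklyCompact Γ

/-- `F`, together with the map `δ : M → F`, is (a realization of) the Lipschitz-free space
over the pointed metric space `(M, o)`: `δ` is a base-point-preserving isometric embedding
whose range has dense linear span, and every Lipschitz function `f : M → ℝ` vanishing at
the base point lifts to a continuous linear functional of norm at most `Lip(f)` (this
characterizes `F(M)`, with dual `Lip₀(M)`, up to isometric isomorphism). -/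
structure IsLipschitzFree {M : Type*} [MetricSpace M] (o : M)
    {F : Type*} [NormedAddCommGroup F] [NormedSpace ℝ F] (δ : M → F) : Prop where
  isometry : Isometry δ
  map_base : δ o = 0
  dense_span : Dense (Submodule.span ℝ (Set.range δ) : Set F)
  lift : ∀ (L : NNReal) (f : M → ℝ), LipschitzWith L f → f o = 0 →
    ∃ φ : F →L[ℝ] ℝ, ‖φ‖ ≤ L ∧ ∀ x, φ (δ x) = f x

/-- The subspace of `F` corresponding to the Lipschitz-free space `F(S)` over a subset
`S ⊆ M`: the closed linear span of `δ(S)`. -/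
def freeSpan {M : Type*} [MetricSpace M] {F : Type*} [NormedAddCommGroup F]
    [NormedSpace ℝ F] (δ : M → F) (S : Set M) : Submodule ℝ F :=
  (Submodule.span ℝ (δ '' S)).topologicalClosure

theorem mem_freeSpan {M : Type*} [MetricSpace M] {F : Type*} [NormedAddCommGroup F]
    [NormedSpace ℝ F] (δ : M → F) {S : Set M} {x : M} (hx : x ∈ S) :
    δ x ∈ freeSpan δ S :=
  (Submodule.span ℝ (δ '' S)).le_topologicalClosure
    (Submodule.subset_span ⟨x, hx, rfl⟩)


theorem hb_aux {E : Type*} [NormedAddCommGroup E] [NormedSpace ℝ E] (N : Submodule ℝ E)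
    (y : E →L[ℝ] ℝ) (c : ℝ) (hc : 0 ≤ c) (h : ∀ φ ∈ N, ‖y φ‖ ≤ c * ‖φ‖) :
    ∃ z : E →L[ℝ] ℝ, ‖z‖ ≤ c ∧ ∀ φ ∈ N, z φ = y φ := by
  obtain ⟨z, hz, hzn⟩ := exists_extension_norm_eq N (y.comp N.subtypeL)
  refine ⟨z, ?_, fun φ hφ => hz ⟨φ, hφ⟩⟩
  rw [hzn]
  exact ContinuousLinearMap.opNorm_le_bound _ hc (fun φ => h φ φ.2)

theorem closed_range_aux {E G : Type*} [NormedAddCommGroup E] [NormedSpace ℝ E] [CompleteSpace E]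
    [NormedAddCommGroup G] [NormedSpace ℝ G] (T : E →ₗᵢ[ℝ] G) (y : G) (hy : ∀ x, T x ≠ y) :
    ∃ d > 0, ∀ x, d ≤ ‖y - T x‖ := by
  by_contra hc
  push Not at hc
  have hclosed : IsClosed (range T) := T.isometry.isUniformInducing.isComplete_range.isClosed
  have hmem : y ∈ closure (range T) := by
    refine Metric.mem_closure_iff.2 fun ε hε => ?_
    obtain ⟨x, hx⟩ := hc ε hε
    exact ⟨_, ⟨x, rfl⟩, by rwa [dist_eq_norm]⟩
  rw [hclosed.closure_eq] at hmem
  obtain ⟨x, hx⟩ := hmem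
  exact hy x hx

theorem vstar_bounded {F : Type*} [NormedAddCommGroup F] [NormedSpace ℝ F] {Γ : Set F}
    (h : IsVStarSet Γ) : ∃ M > 0, ∀ x ∈ Γ, ‖x‖ ≤ M := by
  by_contra hcon
  push Not at hcon
  have h1 : ∀ n : ℕ, ∃ x ∈ Γ, (4:ℝ) ^ n < ‖x‖ := fun n => hcon _ (by positivity)
  choose x hx hxn using h1
  have h2 : ∀ n, ∃ g : F →L[ℝ] ℝ, ‖g‖ ≤ 1 ∧ g (x n) = ‖x n‖ := fun n => by
    obtain ⟨g, hg, hg'⟩ := exists_dual_vector'' ℝ (x n)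
    exact ⟨g, hg, by simpa using hg'⟩
  choose g hg hgx using h2
  have hW : IsWUC (fun n => ((1/2:ℝ) ^ n) • g n) := by
    intro φ
    refine Summable.of_nonneg_of_le (fun n => abs_nonneg _) (fun n => ?_)
      ((summable_geometric_two).mul_left ‖φ‖)
    rw [map_smul, smul_eq_mul, abs_mul, abs_of_nonneg (by positivity : (0:ℝ) ≤ (1/2)^n), mul_comm]
    gcongr
    calc |φ (g n)| ≤ ‖φ‖ * ‖g n‖ := φ.le_opNorm _
      _ ≤ ‖φ‖ * 1 := by gcongr; exact hg n
      _ = ‖φ‖ := mul_one _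
  have h3 := (h _ hW (1/2) (by norm_num)).exists
  obtain ⟨n, hn⟩ := h3
  have := hn _ (hx n)
  simp only [_root_.smul_apply, smul_eq_mul, hgx] at this
  rw [abs_of_nonneg (by positivity)] at this
  have h4 : (1/2:ℝ)^n * 4^n ≤ (1/2)^n * ‖x n‖ := by gcongr; exact (hxn n).le
  rw [← mul_pow] at h4
  have h5 : (1:ℝ) ≤ (1/2*4)^n := one_le_pow₀ (by norm_num)
  linarith

theorem dd_aux {F : Type*} [NormedAddCommGroup F] [NormedSpace ℝ F] [CompleteSpace F]
    (y : (F →L[ℝ] ℝ) →L[ℝ] ℝ) (hy : ∀ x : F, ∃ φ : F →L[ℝ] ℝ, φ x ≠ y φ) :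
    ∃ d > 0, ∀ x : F, d ≤ ‖y - NormedSpace.inclusionInDoubleDual ℝ F x‖ := by
  have := closed_range_aux (NormedSpace.inclusionInDoubleDualLi ℝ (E := F)) y (fun x hx => by
    obtain ⟨φ, hφ⟩ := hy x
    apply hφ
    rw [← hx]
    rfl)
  exact this

/-- Helly type lemma. -/
theorem helly_aux {F : Type*} [NormedAddCommGroup F] [NormedSpace ℝ F]
    (y : (F →L[ℝ] ℝ) →L[ℝ] ℝ) (d : ℝ) (hd : 0 < d)
    (hy : ∀ x : F, d ≤ ‖y - NormedSpace.inclusionInDoubleDual ℝ F x‖)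
    (n : ℕ) (x : Fin n → F) :
    ∃ φ : F →L[ℝ] ℝ, ‖φ‖ ≤ 1 ∧ (∀ i, φ (x i) = 0) ∧ d / 2 < y φ := by
  by_contra hcon
  push Not at hcon
  let N : Submodule ℝ (F →L[ℝ] ℝ) :=
    ⨅ i, LinearMap.ker (NormedSpace.inclusionInDoubleDual ℝ F (x i)).toLinearMap
  have hN : ∀ φ : F →L[ℝ] ℝ, φ ∈ N ↔ ∀ i, φ (x i) = 0 := by
    intro φ
    simp only [N, Submodule.mem_iInf, LinearMap.mem_ker]
    rfl
  have hle : ∀ φ ∈ N, ‖y φ‖ ≤ d / 2 * ‖φ‖ := by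
    intro φ hφ
    rw [hN] at hφ
    rcases eq_or_ne φ 0 with rfl | h0
    · simp
    have hpos : 0 < ‖φ‖ := norm_pos_iff.2 h0
    have key : ∀ s : ℝ, |s| = 1 → s * y φ ≤ d / 2 * ‖φ‖ := by
      intro s hs
      have := hcon ((s * ‖φ‖⁻¹) • φ) (by
        rw [norm_smul, norm_mul, Real.norm_eq_abs, hs, norm_inv, norm_norm, one_mul,
          inv_mul_cancel₀ hpos.ne']) (fun i => by simp [hφ i])
      rw [map_smul, smul_eq_mul] at this
      have h2 : s * ‖φ‖⁻¹ * y φ * ‖φ‖ ≤ d / 2 * ‖φ‖ := by gcongr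
      calc s * y φ = s * ‖φ‖⁻¹ * y φ * ‖φ‖ := by field_simp
        _ ≤ _ := h2
    rw [Real.norm_eq_abs, abs_le]
    have h1 := key 1 (by simp)
    have h2 := key (-1) (by simp)
    constructor <;> linarith
  obtain ⟨z, hzn, hz⟩ := hb_aux N y (d/2) (by positivity) hle
  have hker : N ≤ LinearMap.ker (y - z).toLinearMap := by
    intro φ hφ
    rw [LinearMap.mem_ker]
    change y φ - z φ = 0
    rw [hz φ hφ]; simp
  have hspan := mem_span_of_iInf_ker_le_ker hker
  have : ∃ v : F, (y - z).toLinearMap = (NormedSpace.inclusionInDoubleDual ℝ F v).toLinearMap := by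
    rw [Submodule.mem_span_range_iff_exists_fun] at hspan
    obtain ⟨c, hc⟩ := hspan
    refine ⟨∑ i, c i • x i, ?_⟩
    rw [← hc]
    ext φ
    simp
  obtain ⟨v, hv⟩ := this
  have hv' : y - z = NormedSpace.inclusionInDoubleDual ℝ F v := by
    ext φ
    exact LinearMap.congr_fun hv φ
  have h3 := hy v
  rw [← hv'] at h3
  have h4 : y - (y - z) = z := by ext φ; simp
  rw [h4] at h3
  linarith

theorem not_rwc_functional {F : Type*} [NormedAddCommGroup F] [NormedSpace ℝ F] [CompleteSpace F]
    {Γ : Set F} {M : ℝ} (hM : ∀ x ∈ Γ, ‖x‖ ≤ M) (h : ¬ RelWeaklyCompact Γ) :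
    ∃ y : (F →L[ℝ] ℝ) →L[ℝ] ℝ, (∃ d > 0, ∀ x : F, d ≤ ‖y - NormedSpace.inclusionInDoubleDual ℝ F x‖) ∧
      ∀ (s : Finset (F →L[ℝ] ℝ)) (ε : ℝ), 0 < ε → ∃ x ∈ Γ, ∀ φ ∈ s, |φ x - y φ| < ε := by
  classical
  by_contra hcon
  push Not at hcon
  apply h
  let e : WeakSpace ℝ F → ((F →L[ℝ] ℝ) → ℝ) := fun x φ => φ ((toWeakSpace ℝ F).symm x)
  have he : IsInducing e := ⟨rfl⟩
  unfold RelWeaklyCompact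
  set A := (toWeakSpace ℝ F) '' Γ with hA
  have hcpt : IsCompact (closure (e '' A)) := by
    have hK : IsCompact (Set.pi univ (fun φ : F →L[ℝ] ℝ => Metric.closedBall (0:ℝ) (‖φ‖ * M))) :=
      isCompact_univ_pi (fun φ => isCompact_closedBall _ _)
    apply hK.of_isClosed_subset isClosed_closure
    apply closure_minimal _ hK.isClosed
    rintro _ ⟨_, ⟨x, hx, rfl⟩, rfl⟩
    intro φ _
    simp only [e, mem_closedBall, dist_zero_right]
    refine (φ.le_opNorm _).trans ?_
    gcongr
    exact hM x hx
  have hrange : closure (e '' A) ⊆ range e := by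
    intro g hg
    have happ : ∀ (s : Finset (F →L[ℝ] ℝ)) (ε : ℝ), 0 < ε → ∃ x ∈ Γ, ∀ φ ∈ s, |φ x - g φ| < ε := by
      intro s ε hε
      have hnb : Set.pi (s : Set (F →L[ℝ] ℝ)) (fun φ => Metric.ball (g φ) ε) ∈ 𝓝 g :=
        set_pi_mem_nhds s.finite_toSet (fun φ _ => Metric.ball_mem_nhds _ hε)
      obtain ⟨_, h1, ⟨_, ⟨x, hx, rfl⟩, rfl⟩⟩ := mem_closure_iff_nhds.1 hg _ hnb
      refine ⟨x, hx, fun φ hφ => ?_⟩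
      have := h1 φ hφ
      simpa [e, Real.dist_eq] using this
    have hadd : ∀ φ ψ, g (φ + ψ) = g φ + g ψ := by
      intro φ ψ
      apply eq_of_abs_sub_le_all
      intro ε hε
      obtain ⟨x, -, hx⟩ := happ ({φ + ψ, φ, ψ} : Finset _) (ε/3) (by positivity)
      have h1 := hx (φ + ψ) (by simp)
      have h2 := hx φ (by simp)
      have h3 := hx ψ (by simp)
      rw [_root_.add_apply] at h1
      rw [abs_lt] at h1 h2 h3
      rw [abs_le]
      constructor <;> linarith
    have hsmul : ∀ (c : ℝ) φ, g (c • φ) = c * g φ := by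
      intro c φ
      apply eq_of_abs_sub_le_all
      intro ε hε
      obtain ⟨x, -, hx⟩ := happ ({c • φ, φ} : Finset _) (ε/(2*(|c|+1))) (by positivity)
      have h1 := hx (c • φ) (by simp)
      have h2 := hx φ (by simp)
      rw [_root_.smul_apply, smul_eq_mul] at h1
      have h4 : |c| * |φ x - g φ| ≤ |c| * (ε/(2*(|c|+1))) := by gcongr
      rw [← abs_mul] at h4
      have h5 : |c| * (ε/(2*(|c|+1))) + (ε/(2*(|c|+1))) = ε / 2 := by
        field_simp
      have h6 : g (c • φ) - c * g φ = -(c * φ x - g (c • φ)) + c * (φ x - g φ) := by ring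
      rw [h6]
      refine (abs_add_le _ _).trans ?_
      rw [abs_neg]
      linarith
    have hbd : ∀ φ, ‖g φ‖ ≤ M * ‖φ‖ := by
      intro φ
      apply le_of_forall_pos_le_add
      intro ε hε
      obtain ⟨x, hx, hxx⟩ := happ {φ} ε hε
      have h1 := hxx φ (by simp)
      have h2 : |φ x| ≤ ‖φ‖ * ‖x‖ := φ.le_opNorm x
      have h3 : ‖φ‖ * ‖x‖ ≤ ‖φ‖ * M := by gcongr; exact hM x hx
      rw [Real.norm_eq_abs]
      have h4 : |g φ| ≤ |φ x| + |φ x - g φ| := by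
        have := abs_sub_abs_le_abs_sub (g φ) (φ x)
        rw [abs_sub_comm] at this
        linarith
      linarith
    obtain ⟨y, hyg⟩ : ∃ y : (F →L[ℝ] ℝ) →L[ℝ] ℝ, ∀ φ, y φ = g φ :=
      ⟨LinearMap.mkContinuous ⟨⟨g, hadd⟩, hsmul⟩ M hbd, fun φ => rfl⟩
    by_contra hnot
    have hdist : ∃ d > 0, ∀ x : F, d ≤ ‖y - NormedSpace.inclusionInDoubleDual ℝ F x‖ := by
      refine dd_aux y fun x => ?_
      by_contra hx
      push Not at hx
      apply hnot
      refine ⟨toWeakSpace ℝ F x, ?_⟩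
      ext φ
      rw [← hyg, ← hx φ]
      simp [e]
    obtain ⟨d, hd, hd'⟩ := hdist
    obtain ⟨s, ε, hε, hs⟩ := hcon y ⟨d, hd, hd'⟩
    obtain ⟨x, hx, hx'⟩ := happ s ε hε
    obtain ⟨φ, hφ, hφ'⟩ := hs x hx
    rw [hyg] at hφ'
    exact absurd (hx' φ hφ) (not_lt.2 hφ')
  rw [he.isCompact_iff, he.closure_eq_preimage_closure_image, image_preimage_eq_of_subset hrange]
  exact hcpt

theorem james_seq {F : Type*} [NormedAddCommGroup F] [NormedSpace ℝ F] [CompleteSpace F]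
    {Γ : Set F} {M : ℝ} (hM : ∀ x ∈ Γ, ‖x‖ ≤ M) (h : ¬ RelWeaklyCompact Γ) :
    ∃ θ > 0, ∃ (φ : ℕ → (F →L[ℝ] ℝ)) (x : ℕ → F), (∀ k, x k ∈ Γ) ∧ (∀ i, ‖φ i‖ ≤ 1) ∧
      (∀ i k, i ≤ k → θ ≤ φ i (x k)) ∧ (∀ i k, k < i → φ i (x k) = 0) := by
  obtain ⟨y, ⟨d, hd, hy⟩, happ⟩ := not_rwc_functional hM h
  have step1 : ∀ l : List F, ∃ φ : F →L[ℝ] ℝ, ‖φ‖ ≤ 1 ∧ (∀ x ∈ l, φ x = 0) ∧ d / 2 < y φ := by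
    intro l
    obtain ⟨φ, h1, h2, h3⟩ := helly_aux y d hd hy l.length l.get
    refine ⟨φ, h1, fun x hx => ?_, h3⟩
    obtain ⟨i, rfl⟩ := List.get_of_mem hx
    exact h2 i
  choose Φ hΦ1 hΦ2 hΦ3 using step1
  have step2 : ∀ l : List (F →L[ℝ] ℝ), ∃ x ∈ Γ, ∀ φ ∈ l, |φ x - y φ| < d / 4 := by
    classical
    intro l
    obtain ⟨x, hx, h1⟩ := happ l.toFinset (d/4) (by positivity)
    exact ⟨x, hx, fun φ hφ => h1 φ (by simpa using hφ)⟩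
  choose ξ hξ1 hξ2 using step2
  -- state: lists of functionals and points
  let st : ℕ → List (F →L[ℝ] ℝ) × List F := fun n => Nat.rec ([], [])
    (fun _ p => (Φ p.2 :: p.1, ξ (Φ p.2 :: p.1) :: p.2)) n
  have st_succ : ∀ n, st (n+1) = (Φ (st n).2 :: (st n).1, ξ (Φ (st n).2 :: (st n).1) :: (st n).2) :=
    fun n => rfl
  let φ : ℕ → (F →L[ℝ] ℝ) := fun n => Φ (st n).2
  let x : ℕ → F := fun n => ξ (φ n :: (st n).1)
  have mem1 : ∀ n i, i < n → φ i ∈ (st n).1 := by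
    intro n
    induction n with
    | zero => intro i hi; omega
    | succ n ih =>
      intro i hi
      rw [st_succ]
      rcases Nat.lt_succ_iff_lt_or_eq.1 hi with h | rfl
      · exact List.mem_cons_of_mem _ (ih i h)
      · exact List.mem_cons_self
  have mem2 : ∀ n i, i < n → x i ∈ (st n).2 := by
    intro n
    induction n with
    | zero => intro i hi; omega
    | succ n ih =>
      intro i hi
      rw [st_succ]
      rcases Nat.lt_succ_iff_lt_or_eq.1 hi with h | rfl
      · exact List.mem_cons_of_mem _ (ih i h)
      · exact List.mem_cons_self
  refine ⟨d/4, by positivity, φ, x, fun k => hξ1 _, fun i => hΦ1 _, ?_, ?_⟩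
  · intro i k hik
    have hmem : φ i ∈ φ k :: (st k).1 := by
      rcases hik.lt_or_eq with h | rfl
      · exact List.mem_cons_of_mem _ (mem1 k i h)
      · exact List.mem_cons_self
    have h1 := hξ2 (φ k :: (st k).1) (φ i) hmem
    have h2 := hΦ3 (st i).2
    rw [abs_lt] at h1
    change d / 4 ≤ φ i (ξ (φ k :: (st k).1))
    change d / 2 < y (φ i) at h2
    linarith [h1.1]
  · intro i k hki
    exact hΦ2 _ _ (mem2 i k hki)

section FreeBasics
variable {X : Type*} [NormedAddCommGroup X] {F : Type*} [NormedAddCommGroup F] [NormedSpace ℝ F]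
  {δ : X → F}

theorem free_ext (hδ : IsLipschitzFree (0 : X) δ) {φ ψ : F →L[ℝ] ℝ}
    (h : ∀ x, φ (δ x) = ψ (δ x)) : φ = ψ := by
  apply ContinuousLinearMap.ext_on hδ.dense_span
  rintro _ ⟨x, rfl⟩
  exact h x

theorem free_lift (hδ : IsLipschitzFree (0 : X) δ) (C : ℝ) (hC : 0 ≤ C) (f : X → ℝ)
    (hf : ∀ x y, |f x - f y| ≤ C * ‖x - y‖) (h0 : f 0 = 0) :
    ∃ φ : F →L[ℝ] ℝ, ‖φ‖ ≤ C ∧ ∀ x, φ (δ x) = f x := by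
  obtain ⟨φ, h1, h2⟩ := hδ.lift ⟨C, hC⟩ f (LipschitzWith.of_dist_le_mul fun x y => by
    rw [Real.dist_eq, dist_eq_norm]; exact hf x y) h0
  exact ⟨φ, h1, h2⟩

theorem free_norm (hδ : IsLipschitzFree (0 : X) δ) (x y : X) : ‖δ x - δ y‖ = ‖x - y‖ := by
  rw [← dist_eq_norm, hδ.isometry.dist_eq, dist_eq_norm]

theorem free_dual_lip (hδ : IsLipschitzFree (0 : X) δ) (φ : F →L[ℝ] ℝ) (x y : X) :
    |φ (δ x) - φ (δ y)| ≤ ‖φ‖ * ‖x - y‖ := by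
  rw [← map_sub, ← free_norm hδ]
  exact φ.le_opNorm _

theorem free_dual_zero (hδ : IsLipschitzFree (0 : X) δ) (φ : F →L[ℝ] ℝ) : φ (δ 0) = 0 := by
  rw [hδ.map_base, map_zero]

theorem free_norm_le (hδ : IsLipschitzFree (0 : X) δ) (φ : F →L[ℝ] ℝ) (C : ℝ) (hC : 0 ≤ C)
    (h : ∀ x y, |φ (δ x) - φ (δ y)| ≤ C * ‖x - y‖) : ‖φ‖ ≤ C := by
  obtain ⟨ψ, h1, h2⟩ := free_lift hδ C hC (fun x => φ (δ x)) h (free_dual_zero hδ φ)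
  rwa [free_ext hδ (φ := φ) (ψ := ψ) (fun x => (h2 x).symm)]

theorem free_wuc (hδ : IsLipschitzFree (0 : X) δ) (γ : ℕ → (F →L[ℝ] ℝ)) (C : ℝ) (hC : 0 ≤ C)
    (h : ∀ (s : Finset ℕ) (x y : X), ∑ n ∈ s, |γ n (δ x) - γ n (δ y)| ≤ C * ‖x - y‖) :
    IsWUC γ := by
  intro Φ
  refine summable_of_sum_le (c := ‖Φ‖ * C) (fun n => abs_nonneg _) (fun s => ?_)
  have hσ : ∀ n, ∃ σ : ℝ, |σ| ≤ 1 ∧ |Φ (γ n)| = σ * Φ (γ n) := by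
    intro n
    rcases le_total 0 (Φ (γ n)) with h | h
    · exact ⟨1, by simp, by rw [abs_of_nonneg h, one_mul]⟩
    · exact ⟨-1, by simp, by rw [abs_of_nonpos h]; ring⟩
  choose σ hσ1 hσ2 using hσ
  have hn : ‖∑ n ∈ s, σ n • γ n‖ ≤ C := by
    apply free_norm_le hδ _ _ hC
    intro x y
    refine le_trans ?_ (h s x y)
    have : (∑ n ∈ s, σ n • γ n) (δ x) - (∑ n ∈ s, σ n • γ n) (δ y)
        = ∑ n ∈ s, σ n * (γ n (δ x) - γ n (δ y)) := by
      simp [← Finset.sum_sub_distrib, mul_sub]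
    rw [this]
    refine (Finset.abs_sum_le_sum_abs _ _).trans (Finset.sum_le_sum fun n _ => ?_)
    rw [abs_mul]
    exact mul_le_of_le_one_left (abs_nonneg _) (hσ1 n)
  calc ∑ n ∈ s, |Φ (γ n)| = Φ (∑ n ∈ s, σ n • γ n) := by
        rw [map_sum]; exact Finset.sum_congr rfl fun n _ => by rw [hσ2, map_smul, smul_eq_mul]
    _ ≤ |Φ (∑ n ∈ s, σ n • γ n)| := le_abs_self _
    _ ≤ ‖Φ‖ * ‖∑ n ∈ s, σ n • γ n‖ := Φ.le_opNorm _
    _ ≤ ‖Φ‖ * C := by gcongr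

theorem free_approx (hδ : IsLipschitzFree (0 : X) δ) (x : F) (η : ℝ) (hη : 0 < η) :
    ∃ (D : Finset X) (x' : F), ‖x - x'‖ ≤ η ∧
      ∀ φ ψ : F →L[ℝ] ℝ, (∀ p ∈ D, φ (δ p) = ψ (δ p)) → φ x' = ψ x' := by
  classical
  obtain ⟨x', hx', hd⟩ := Metric.mem_closure_iff.1 (hδ.dense_span x) η hη
  have : ∃ D : Finset X, ∀ φ ψ : F →L[ℝ] ℝ, (∀ p ∈ D, φ (δ p) = ψ (δ p)) → φ x' = ψ x' := by
    clear hd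
    induction hx' using Submodule.span_induction with
    | mem x h =>
      obtain ⟨p, rfl⟩ := h
      exact ⟨{p}, fun φ ψ h => h p (by simp)⟩
    | zero => exact ⟨∅, fun φ ψ _ => by simp⟩
    | add x y _ _ hx hy =>
      obtain ⟨D1, h1⟩ := hx
      obtain ⟨D2, h2⟩ := hy
      refine ⟨D1 ∪ D2, fun φ ψ h => ?_⟩
      rw [map_add, map_add, h1 φ ψ fun p hp => h p (Finset.mem_union_left _ hp),
        h2 φ ψ fun p hp => h p (Finset.mem_union_right _ hp)]
    | smul a x _ hx =>
      obtain ⟨D1, h1⟩ := hx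
      exact ⟨D1, fun φ ψ h => by rw [map_smul, map_smul, h1 φ ψ h]⟩
  obtain ⟨D, hD⟩ := this
  exact ⟨D, x', by rw [← dist_eq_norm]; exact hd.le, hD⟩

/-- Localization principle for (V*)-sets. -/
theorem free_localize (hδ : IsLipschitzFree (0 : X) δ) {Γ : Set F} (hΓ : IsVStarSet Γ)
    (U : Finset X → Set X) (hU : ∀ E E', E ⊆ E' → U E ⊆ U E') (C : ℝ) (hC : 0 ≤ C)
    (hcut : ∀ (E E' : Finset X) (f : X → ℝ), E ⊆ E' → (∀ x y, |f x - f y| ≤ ‖x - y‖) →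
      f 0 = 0 → (∀ x ∈ U E, f x = 0) →
      ∃ g : X → ℝ, (∀ x y, |g x - g y| ≤ C * ‖x - y‖) ∧ (∀ p ∈ E', g p = f p) ∧
        (∀ x, f x = 0 → g x = 0) ∧ (∀ x, x ∉ U E' → g x = 0))
    (ε : ℝ) (hε : 0 < ε) :
    ∃ E : Finset X, ∀ φ : F →L[ℝ] ℝ, ‖φ‖ ≤ 1 → (∀ x ∈ U E, φ (δ x) = 0) → ∀ x ∈ Γ, |φ x| ≤ ε := by
  classical
  by_contra hcon
  push Not at hcon
  choose φ hφ1 hφU ξ hξ hbig using hcon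
  have hη : 0 < ε / (2 * (C + 1)) := by positivity
  choose D x' hx' hD using fun E => free_approx hδ (ξ E) (ε / (2 * (C + 1))) hη
  let E : ℕ → Finset X := fun n => Nat.rec ∅ (fun _ A => A ∪ D A) n
  have hE : ∀ n, E (n+1) = E n ∪ D (E n) := fun n => rfl
  have hEmono : Monotone E := monotone_nat_of_le_succ fun n => by
    rw [hE]; exact Finset.subset_union_left
  have hex : ∀ n, ∃ γ : F →L[ℝ] ℝ, ‖γ‖ ≤ C ∧ (∀ p ∈ E (n+1), γ (δ p) = φ (E n) (δ p)) ∧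
      (∀ x ∈ U (E n), γ (δ x) = 0) ∧ (∀ x, x ∉ U (E (n+1)) → γ (δ x) = 0) := by
    intro n
    obtain ⟨g, hg1, hg2, hg3, hg4⟩ := hcut (E n) (E (n+1)) (fun x => φ (E n) (δ x))
      (hEmono (Nat.le_succ n)) (fun x y => (free_dual_lip hδ _ x y).trans
        (mul_le_of_le_one_left (norm_nonneg _) (hφ1 _))) (free_dual_zero hδ _) (hφU _)
    obtain ⟨γ, h1, h2⟩ := free_lift hδ C hC g hg1 (hg3 0 (free_dual_zero hδ _))
    refine ⟨γ, h1, fun p hp => by rw [h2, hg2 p hp], fun x hx => ?_, fun x hx => by rw [h2, hg4 x hx]⟩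
    rw [h2, hg3 x (hφU _ x hx)]
  choose γ hγ1 hγ2 hγ3 hγ4 using hex
  have hdisj : ∀ x n m, γ n (δ x) ≠ 0 → γ m (δ x) ≠ 0 → n = m := by
    have key : ∀ x n m, n < m → γ n (δ x) ≠ 0 → γ m (δ x) = 0 := by
      intro x n m hnm hn
      apply hγ3
      have : x ∈ U (E (n+1)) := by
        by_contra h
        exact hn (hγ4 n x h)
      exact hU _ _ (hEmono hnm) this
    intro x n m hn hm
    rcases lt_trichotomy n m with h | h | h
    · exact absurd (key x n m h hn) hm
    · exact h
    · exact absurd (key x m n h hm) hn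
  have hW : IsWUC γ := by
    apply free_wuc hδ γ (2 * C) (by positivity)
    intro s x y
    have hone : ∀ z : X, ∑ n ∈ s, (if γ n (δ z) ≠ 0 then C * ‖x - y‖ else 0) ≤ C * ‖x - y‖ := by
      intro z
      by_cases hz : ∃ n, γ n (δ z) ≠ 0
      · obtain ⟨n, hn⟩ := hz
        calc ∑ m ∈ s, (if γ m (δ z) ≠ 0 then C * ‖x - y‖ else 0)
            ≤ ∑ m ∈ s, (if n = m then C * ‖x - y‖ else 0) := by
              apply Finset.sum_le_sum
              intro m _
              by_cases hm : γ m (δ z) ≠ 0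
              · rw [if_pos hm, if_pos (hdisj z n m hn hm)]
              · rw [if_neg hm]; split_ifs <;> positivity
          _ ≤ C * ‖x - y‖ := by
              rw [Finset.sum_ite_eq]; split_ifs
              · exact le_rfl
              · positivity
      · push Not at hz
        simp only [hz, ne_eq, not_true_eq_false, if_false, Finset.sum_const_zero]
        positivity
    calc ∑ n ∈ s, |γ n (δ x) - γ n (δ y)|
        ≤ ∑ n ∈ s, ((if γ n (δ x) ≠ 0 then C * ‖x - y‖ else 0)
            + (if γ n (δ y) ≠ 0 then C * ‖x - y‖ else 0)) := by
          apply Finset.sum_le_sum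
          intro n _
          have hb : |γ n (δ x) - γ n (δ y)| ≤ C * ‖x - y‖ :=
            (free_dual_lip hδ _ x y).trans (by gcongr; exact hγ1 n)
          have hp : 0 ≤ C * ‖x - y‖ := by positivity
          split_ifs with h1 h2 h2
          · linarith
          · linarith
          · linarith
          · push Not at h1 h2
            simp [h1, h2]
      _ ≤ 2 * C * ‖x - y‖ := by
          rw [Finset.sum_add_distrib]
          have := hone x
          have := hone y
          linarith
  obtain ⟨n, hn⟩ := (hΓ γ hW (ε/4) (by positivity)).exists
  have h1 := hn _ (hξ (E n))
  have h2 := hbig (E n)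
  have h3 : γ n (x' (E n)) = φ (E n) (x' (E n)) := hD (E n) _ _ fun p hp =>
    hγ2 n p (by rw [hE]; exact Finset.mem_union_right _ hp)
  have h4 : |γ n (ξ (E n)) - γ n (x' (E n))| ≤ C * (ε / (2 * (C + 1))) := by
    rw [← map_sub]
    refine ((γ n).le_opNorm _).trans ?_
    gcongr
    · exact hγ1 n
    · exact hx' _
  have h5 : |φ (E n) (ξ (E n)) - φ (E n) (x' (E n))| ≤ 1 * (ε / (2 * (C + 1))) := by
    rw [← map_sub]
    refine ((φ (E n)).le_opNorm _).trans ?_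
    gcongr
    · exact hφ1 _
    · exact hx' _
  have h6 : C * (ε / (2 * (C + 1))) + 1 * (ε / (2 * (C + 1))) = ε / 2 := by field_simp
  rw [h3] at h4
  rw [abs_le] at h1 h4 h5
  rw [lt_abs] at h2
  rcases h2 with h2 | h2 <;> linarith [h1.1, h1.2, h4.1, h4.2, h5.1, h5.2]

theorem cut_lip {f : X → ℝ} (hf : ∀ x y, |f x - f y| ≤ ‖x - y‖) (h0 : f 0 = 0) {R : ℝ}
    (hR : 0 < R) (x y : X) :
    |f x * max 0 (min 1 (2 - ‖x‖ / R)) - f y * max 0 (min 1 (2 - ‖y‖ / R))| ≤ 3 * ‖x - y‖ := by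
  have hc : ∀ x y : X, |max 0 (min 1 (2 - ‖x‖ / R)) - max 0 (min 1 (2 - ‖y‖ / R))| ≤ ‖x - y‖ / R := by
    intro x y
    have h1 : |max 0 (min 1 (2 - ‖x‖ / R)) - max 0 (min 1 (2 - ‖y‖ / R))|
        ≤ |(2 - ‖x‖ / R) - (2 - ‖y‖ / R)| := by
      rw [max_comm 0, max_comm 0, min_comm 1, min_comm 1]
      exact (abs_max_sub_max_le_abs _ _ _).trans ((abs_min_sub_min_le_max _ _ _ _).trans (by simp))
    refine h1.trans ?_
    have : (2 - ‖x‖ / R) - (2 - ‖y‖ / R) = (‖y‖ - ‖x‖) / R := by ring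
    rw [this, abs_div, abs_of_pos hR, abs_sub_comm]
    gcongr
    exact abs_norm_sub_norm_le x y
  have main : ∀ x y : X, ‖x‖ ≤ 2 * R →
      |f x * max 0 (min 1 (2 - ‖x‖ / R)) - f y * max 0 (min 1 (2 - ‖y‖ / R))| ≤ 3 * ‖x - y‖ := by
    intro x y hx
    have e : f x * max 0 (min 1 (2 - ‖x‖ / R)) - f y * max 0 (min 1 (2 - ‖y‖ / R))
      = f x * (max 0 (min 1 (2 - ‖x‖ / R)) - max 0 (min 1 (2 - ‖y‖ / R)))
        + (f x - f y) * max 0 (min 1 (2 - ‖y‖ / R)) := by ring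
    rw [e]
    refine (abs_add_le _ _).trans ?_
    rw [abs_mul, abs_mul]
    have h1 : |f x| ≤ 2 * R := by
      have := hf x 0
      rw [h0, sub_zero, sub_zero] at this
      linarith
    have h2 : |max 0 (min 1 (2 - ‖y‖ / R))| ≤ 1 := by
      rw [abs_of_nonneg (le_max_left _ _)]
      exact max_le zero_le_one (min_le_left _ _)
    have h3 := mul_le_mul h1 (hc x y) (abs_nonneg _) (by positivity)
    have h4 := mul_le_mul (hf x y) h2 (abs_nonneg _) (by positivity)
    have h5 : 2 * R * (‖x - y‖ / R) = 2 * ‖x - y‖ := by field_simp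
    linarith
  have hz : ∀ x : X, 2 * R ≤ ‖x‖ → max 0 (min 1 (2 - ‖x‖ / R)) = 0 := by
    intro x hx
    apply max_eq_left
    apply (min_le_right _ _).trans
    rw [sub_nonpos, le_div_iff₀ hR]
    exact hx
  rcases le_total ‖x‖ (2 * R) with hx | hx
  · exact main x y hx
  rcases le_total ‖y‖ (2 * R) with hy | hy
  · rw [abs_sub_comm, norm_sub_rev]; exact main y x hy
  · rw [hz x hx, hz y hy]; simp

theorem cut_one {R : ℝ} (hR : 0 < R) {x : X} (hx : ‖x‖ ≤ R) :
    max 0 (min 1 (2 - ‖x‖ / R)) = 1 := by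
  have : ‖x‖ / R ≤ 1 := by rw [div_le_one hR]; exact hx
  rw [min_eq_left (by linarith), max_eq_right zero_le_one]

theorem cut_zero {R : ℝ} (hR : 0 < R) {x : X} (hx : 2 * R ≤ ‖x‖) :
    max 0 (min 1 (2 - ‖x‖ / R)) = 0 := by
  apply max_eq_left
  apply (min_le_right _ _).trans
  rw [sub_nonpos, le_div_iff₀ hR]
  exact hx

theorem free_bounded_support (hδ : IsLipschitzFree (0 : X) δ) {Γ : Set F} (hΓ : IsVStarSet Γ)
    (ε : ℝ) (hε : 0 < ε) :
    ∃ R > 0, ∀ φ : F →L[ℝ] ℝ, ‖φ‖ ≤ 1 → (∀ x, ‖x‖ ≤ R → φ (δ x) = 0) → ∀ x ∈ Γ, |φ x| ≤ ε := by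
  let r : Finset X → ℝ := fun E => (E.sup nnnorm : NNReal) + 1
  have hr : ∀ E, 0 < r E := fun E => by positivity
  have hrm : ∀ E, ∀ p ∈ E, ‖p‖ ≤ r E := by
    intro E p hp
    have : ‖p‖₊ ≤ E.sup nnnorm := Finset.le_sup (f := nnnorm) hp
    have h2 : (‖p‖₊ : ℝ) ≤ (E.sup nnnorm : NNReal) := by exact_mod_cast this
    rw [coe_nnnorm] at h2
    simp only [r]; linarith
  obtain ⟨E, hE⟩ := free_localize hδ hΓ (fun E => {x | ‖x‖ ≤ 2 * r E}) (by
      intro E E' h x hx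
      have : r E ≤ r E' := by
        have : E.sup nnnorm ≤ E'.sup nnnorm := Finset.sup_mono (f := (nnnorm : X → NNReal)) h
        have h2 : ((E.sup nnnorm : NNReal) : ℝ) ≤ (E'.sup nnnorm : NNReal) := by exact_mod_cast this
        simp only [r]; linarith
      simp only [mem_ofPred_eq] at hx ⊢
      linarith) 3 (by norm_num) (by
      intro E E' f hEE hf h0 hfU
      refine ⟨fun x => f x * max 0 (min 1 (2 - ‖x‖ / r E')), cut_lip hf h0 (hr E'), ?_, ?_, ?_⟩
      · intro p hp
        simp only [cut_one (hr E') (hrm E' p hp), mul_one]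
      · intro x hx
        simp only [hx, zero_mul]
      · intro x hx
        simp only [mem_ofPred_eq, not_le] at hx
        simp only [cut_zero (hr E') hx.le, mul_zero]) ε hε
  exact ⟨2 * r E, by have := hr E; positivity, hE⟩

theorem free_tight (hδ : IsLipschitzFree (0 : X) δ) {Γ : Set F} (hΓ : IsVStarSet Γ)
    (d ε : ℝ) (hd : 0 < d) (hε : 0 < ε) :
    ∃ E : Finset X, ∀ φ : F →L[ℝ] ℝ, ‖φ‖ ≤ 1 →
      (∀ x, infDist x (insert 0 (E : Set X)) < d → φ (δ x) = 0) → ∀ x ∈ Γ, |φ x| ≤ ε := by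
  obtain ⟨R, hR, hRφ⟩ := free_bounded_support hδ hΓ (ε/8) (by positivity)
  have hne : ∀ E : Finset X, (insert 0 (E : Set X)).Nonempty := fun E => ⟨0, by simp⟩
  obtain ⟨E, hE⟩ := free_localize hδ hΓ
    (fun E => {x | infDist x (insert 0 (E : Set X)) < d ∨ 2 * R ≤ ‖x‖}) (by
      rintro E E' h x (hx | hx)
      · left
        refine lt_of_le_of_lt (infDist_le_infDist_of_subset ?_ (hne E)) hx
        exact insert_subset_insert (by exact_mod_cast h)
      · exact Or.inr hx) (1 + 2 * R / d) (by positivity) (by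
      intro E E' f hEE hf h0 hfU
      have hb : ∀ x, |f x| ≤ 2 * R := by
        intro x
        rcases le_total (2 * R) ‖x‖ with h | h
        · rw [hfU x (Or.inr h), abs_zero]; positivity
        · have := hf x 0
          rw [h0, sub_zero, sub_zero] at this
          linarith
      refine ⟨fun x => f x * max 0 (1 - infDist x (insert 0 (E' : Set X)) / d), ?_, ?_, ?_, ?_⟩
      · intro x y
        simp only
        have e : f x * max 0 (1 - infDist x (insert 0 (E' : Set X)) / d)
            - f y * max 0 (1 - infDist y (insert 0 (E' : Set X)) / d)
          = f x * (max 0 (1 - infDist x (insert 0 (E' : Set X)) / d)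
              - max 0 (1 - infDist y (insert 0 (E' : Set X)) / d))
            + (f x - f y) * max 0 (1 - infDist y (insert 0 (E' : Set X)) / d) := by ring
        rw [e]
        refine (abs_add_le _ _).trans ?_
        rw [abs_mul, abs_mul]
        have h2 : |max 0 (1 - infDist y (insert 0 (E' : Set X)) / d)| ≤ 1 := by
          rw [abs_of_nonneg (le_max_left _ _)]
          refine max_le zero_le_one ?_
          have : 0 ≤ infDist y (insert 0 (E' : Set X)) / d := div_nonneg infDist_nonneg hd.le
          linarith
        have h6 : |max 0 (1 - infDist x (insert 0 (E' : Set X)) / d)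
              - max 0 (1 - infDist y (insert 0 (E' : Set X)) / d)| ≤ ‖x - y‖ / d := by
          rw [max_comm 0, max_comm 0]
          refine (abs_max_sub_max_le_abs _ _ _).trans ?_
          have : (1 - infDist x (insert 0 (E' : Set X)) / d) - (1 - infDist y (insert 0 (E' : Set X)) / d)
            = (infDist y (insert 0 (E' : Set X)) - infDist x (insert 0 (E' : Set X))) / d := by ring
          rw [this, abs_div, abs_of_pos hd, abs_sub_comm]
          gcongr
          have h7 := (lipschitz_infDist_pt (insert 0 (E' : Set X))).dist_le_mul x y
          rw [Real.dist_eq, dist_eq_norm, NNReal.coe_one, one_mul] at h7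
          exact h7
        have h3 := mul_le_mul (hb x) h6 (abs_nonneg _) (by positivity)
        have h4 := mul_le_mul (hf x y) h2 (abs_nonneg _) (by positivity)
        have h5 : 2 * R * (‖x - y‖ / d) = 2 * R / d * ‖x - y‖ := by ring
        linarith
      · intro p hp
        have : infDist p (insert 0 (E' : Set X)) = 0 :=
          infDist_zero_of_mem (mem_insert_of_mem _ (by exact_mod_cast hp))
        simp [this]
      · intro x hx
        simp [hx]
      · intro x hx
        simp only [mem_ofPred_eq, not_or, not_lt] at hx
        have : max 0 (1 - infDist x (insert 0 (E' : Set X)) / d) = 0 := by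
          apply max_eq_left
          rw [sub_nonpos, le_div_iff₀ hd]
          linarith [hx.1]
        simp only [this, mul_zero]) (ε/8) (by positivity)
  refine ⟨E, fun φ hφ hφE => ?_⟩
  obtain ⟨ψ, hψ1, hψ2⟩ := free_lift hδ 3 (by norm_num)
    (fun x => φ (δ x) * max 0 (min 1 (2 - ‖x‖ / R)))
    (cut_lip (fun x y => (free_dual_lip hδ φ x y).trans
        (mul_le_of_le_one_left (norm_nonneg _) hφ)) (free_dual_zero hδ φ) hR)
    (by simp [free_dual_zero hδ φ])
  intro x hx
  have h1 := hRφ ((1/4:ℝ) • (φ - ψ)) (by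
    rw [norm_smul, Real.norm_of_nonneg (by norm_num)]
    have := norm_sub_le φ ψ
    linarith) (fun z hz => by
      simp only [_root_.smul_apply, _root_.sub_apply, hψ2, cut_one hR hz, mul_one, sub_self, smul_zero]) x hx
  have h2 := hE ((1/3:ℝ) • ψ) (by
    rw [norm_smul, Real.norm_of_nonneg (by norm_num)]
    linarith) (fun z hz => by
      rcases hz with hz | hz
      · simp [hψ2, hφE z hz]
      · simp only [_root_.smul_apply, hψ2, cut_zero hR hz, mul_zero, smul_zero]) x hx
  simp only [_root_.smul_apply, _root_.sub_apply, smul_eq_mul] at h1 h2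
  rw [abs_le] at h1 h2 ⊢
  constructor <;> linarith [h1.1, h1.2, h2.1, h2.2]

end FreeBasics

set_option linter.unusedSectionVars false

section Smooth
variable {X : Type*} [NormedAddCommGroup X] [InnerProductSpace ℝ X]

structure SmoothPair (f : X → ℝ) (G : X → X) : Prop where
  hd : ∀ x, HasFDerivAt f (innerSL ℝ (G x)) x
  lip : ∃ K : ℝ, 0 ≤ K ∧ ∀ x y, ‖G x - G y‖ ≤ K * ‖x - y‖
  bd : ∀ x, ‖G x‖ ≤ 1

theorem SmoothPair.lip1 {f : X → ℝ} {G : X → X} (h : SmoothPair f G) (x y : X) :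
    |f x - f y| ≤ ‖x - y‖ := by
  have := Convex.norm_image_sub_le_of_norm_hasFDerivWithin_le (s := univ) (C := 1)
    (fun x _ => (h.hd x).hasFDerivWithinAt) (fun x _ => by
      rw [innerSL_apply_norm]; exact h.bd x) convex_univ (mem_univ y) (mem_univ x)
  rwa [one_mul, Real.norm_eq_abs] at this

theorem SmoothPair.continuous_grad {f : X → ℝ} {G : X → X} (h : SmoothPair f G) :
    Continuous G := by
  obtain ⟨K, hK, hl⟩ := h.lip
  exact (LipschitzWith.of_dist_le_mul (K := ⟨K, hK⟩) fun x y => by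
    rw [dist_eq_norm, dist_eq_norm]; exact hl x y).continuous

theorem SmoothPair.comb {f g : X → ℝ} {G H : X → X} (hf : SmoothPair f G) (hg : SmoothPair g H)
    (a b : ℝ) (hab : |a| + |b| ≤ 1) :
    SmoothPair (fun x => a * f x + b * g x) (fun x => a • G x + b • H x) := by
  refine ⟨fun x => ?_, ?_, fun x => ?_⟩
  · have := ((hf.hd x).const_mul a).add ((hg.hd x).const_mul b)
    rw [map_add, map_smul, map_smul]
    exact this
  · obtain ⟨K, hK, hl⟩ := hf.lip
    obtain ⟨K', hK', hl'⟩ := hg.lip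
    refine ⟨|a| * K + |b| * K', by positivity, fun x y => ?_⟩
    have : a • G x + b • H x - (a • G y + b • H y) = a • (G x - G y) + b • (H x - H y) := by
      rw [smul_sub, smul_sub]; abel
    rw [this]
    refine (norm_add_le _ _).trans ?_
    rw [norm_smul, norm_smul, Real.norm_eq_abs, Real.norm_eq_abs, add_mul, mul_assoc, mul_assoc]
    gcongr
    · exact hl x y
    · exact hl' x y
  · refine (norm_add_le _ _).trans ?_
    rw [norm_smul, norm_smul, Real.norm_eq_abs, Real.norm_eq_abs]
    have h1 := mul_le_mul_of_nonneg_left (hf.bd x) (abs_nonneg a)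
    have h2 := mul_le_mul_of_nonneg_left (hg.bd x) (abs_nonneg b)
    linarith

theorem SmoothPair.add_const {f : X → ℝ} {G : X → X} (hf : SmoothPair f G) (c : ℝ) :
    SmoothPair (fun x => f x + c) G :=
  ⟨fun x => (hf.hd x).add_const c, hf.lip, hf.bd⟩

theorem sqrt_ge_s (v : X) {s : ℝ} (_hs : 0 < s) : s ≤ √(‖v‖ ^ 2 + s ^ 2) :=
  Real.le_sqrt_of_sq_le (by nlinarith [sq_nonneg ‖v‖])

theorem sqrt_ge_norm (v : X) (s : ℝ) : ‖v‖ ≤ √(‖v‖ ^ 2 + s ^ 2) :=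
  Real.le_sqrt_of_sq_le (by nlinarith [sq_nonneg s])

theorem sqrt_le_norm_add (v : X) {s : ℝ} (hs : 0 < s) : √(‖v‖ ^ 2 + s ^ 2) ≤ ‖v‖ + s := by
  apply Real.sqrt_le_iff.2
  have := norm_nonneg v
  constructor
  · positivity
  · nlinarith

theorem rho_norm_le (v : X) {s : ℝ} (hs : 0 < s) : ‖(√(‖v‖ ^ 2 + s ^ 2))⁻¹ • v‖ ≤ 1 := by
  have h1 := sqrt_ge_s v hs
  have h2 := sqrt_ge_norm v s
  rw [norm_smul, norm_inv, Real.norm_of_nonneg (by linarith), inv_mul_le_iff₀ (by linarith), mul_one]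
  exact h2

theorem sqrt_lip (v w : X) {s : ℝ} (hs : 0 < s) :
    |√(‖v‖ ^ 2 + s ^ 2) - √(‖w‖ ^ 2 + s ^ 2)| ≤ ‖v - w‖ := by
  have a1 := sqrt_ge_s v hs
  have a2 := sqrt_ge_s w hs
  have b1 := sqrt_ge_norm v s
  have b2 := sqrt_ge_norm w s
  have c1 := Real.sq_sqrt (show 0 ≤ ‖v‖ ^ 2 + s ^ 2 by positivity)
  have c2 := Real.sq_sqrt (show 0 ≤ ‖w‖ ^ 2 + s ^ 2 by positivity)
  set A := √(‖v‖ ^ 2 + s ^ 2)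
  set B := √(‖w‖ ^ 2 + s ^ 2)
  refine le_trans ?_ (abs_norm_sub_norm_le v w)
  have hAB : 0 < A + B := by linarith
  have e : (A - B) * (A + B) = (‖v‖ - ‖w‖) * (‖v‖ + ‖w‖) := by nlinarith
  have e2 : |A - B| * (A + B) = |‖v‖ - ‖w‖| * (‖v‖ + ‖w‖) := by
    rw [← abs_of_pos hAB, ← abs_mul, e, abs_mul, abs_of_nonneg (by positivity : 0 ≤ ‖v‖ + ‖w‖)]
  have e3 : |‖v‖ - ‖w‖| * (‖v‖ + ‖w‖) ≤ |‖v‖ - ‖w‖| * (A + B) := by gcongr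
  rw [← e2] at e3
  exact le_of_mul_le_mul_right e3 hAB

theorem rho_lip (v w : X) {s : ℝ} (hs : 0 < s) :
    ‖(√(‖v‖ ^ 2 + s ^ 2))⁻¹ • v - (√(‖w‖ ^ 2 + s ^ 2))⁻¹ • w‖ ≤ 2 / s * ‖v - w‖ := by
  have a1 := sqrt_ge_s v hs
  have a2 := sqrt_ge_s w hs
  have h1 := rho_norm_le w hs
  have h2 := sqrt_lip v w hs
  set A := √(‖v‖ ^ 2 + s ^ 2)
  set B := √(‖w‖ ^ 2 + s ^ 2)
  have hA : 0 < A := by linarith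
  have hB : 0 < B := by linarith
  have e : A⁻¹ • v - B⁻¹ • w = A⁻¹ • (v - w) + (A⁻¹ * (B - A)) • (B⁻¹ • w) := by
    have : A⁻¹ * (B - A) * B⁻¹ = A⁻¹ - B⁻¹ := by field_simp
    rw [smul_smul, this, smul_sub, sub_smul]; abel
  rw [e]
  refine (norm_add_le _ _).trans ?_
  rw [norm_smul, norm_smul (A⁻¹ * (B - A)), norm_mul, norm_inv, Real.norm_of_nonneg hA.le,
    Real.norm_eq_abs, abs_sub_comm]
  have h3 : A⁻¹ ≤ s⁻¹ := by gcongr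
  have h4 : A⁻¹ * ‖v - w‖ ≤ s⁻¹ * ‖v - w‖ := by gcongr
  have h5 : A⁻¹ * |A - B| * ‖B⁻¹ • w‖ ≤ s⁻¹ * ‖v - w‖ * 1 := by gcongr
  have : 2 / s * ‖v - w‖ = s⁻¹ * ‖v - w‖ + s⁻¹ * ‖v - w‖ * 1 := by ring
  linarith

theorem smooth_norm (p : X) {s : ℝ} (hs : 0 < s) :
    SmoothPair (fun x => √(‖x - p‖ ^ 2 + s ^ 2))
      (fun x => (√(‖x - p‖ ^ 2 + s ^ 2))⁻¹ • (x - p)) := by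
  refine ⟨fun x => ?_, ⟨2 / s, by positivity, fun x y => ?_⟩, fun x => rho_norm_le _ hs⟩
  · have h0 : HasFDerivAt (fun x : X => x - p) (ContinuousLinearMap.id ℝ X) x :=
      (hasFDerivAt_id x).sub_const p
    have h1 := (h0.norm_sq.add_const (s ^ 2)).sqrt (by positivity)
    convert h1 using 1
    ext v
    simp
    ring
  · have := rho_lip (x - p) (y - p) hs
    rwa [sub_sub_sub_cancel_right] at this

theorem smooth_min {a b : X → ℝ} {A B : X → X} (ha : SmoothPair a A) (hb : SmoothPair b B)
    {s : ℝ} (hs : 0 < s) :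
    ∃ G, SmoothPair (fun x => (a x + b x - √((a x - b x) ^ 2 + s ^ 2)) / 2) G := by
  let r : X → ℝ := fun x => (√((a x - b x) ^ 2 + s ^ 2))⁻¹ * (a x - b x)
  have hrn : ∀ x, |r x| ≤ 1 := fun x => by
    have := rho_norm_le (a x - b x) hs
    simpa [r] using this
  have hab : ∀ x y, |(a x - b x) - (a y - b y)| ≤ 2 * ‖x - y‖ := fun x y => by
    have h1 := ha.lip1 x y
    have h2 := hb.lip1 x y
    rw [abs_le] at *
    constructor <;> linarith [h1.1, h1.2, h2.1, h2.2]
  have hrl : ∀ x y, |r x - r y| ≤ 4 / s * ‖x - y‖ := fun x y => by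
    have := rho_lip (a x - b x) (a y - b y) hs
    simp only [Real.norm_eq_abs, sq_abs, smul_eq_mul] at this
    refine this.trans ?_
    have h2 : 2 / s * |(a x - b x) - (a y - b y)| ≤ 2 / s * (2 * ‖x - y‖) := by
      gcongr; exact hab x y
    refine h2.trans (le_of_eq ?_)
    ring
  refine ⟨fun x => (1/2 : ℝ) • (A x + B x) - (1/2 * r x) • (A x - B x), fun x => ?_, ?_, fun x => ?_⟩
  · have h1 := (((ha.hd x).sub (hb.hd x)).pow 2).add_const (s ^ 2)
    have h2 := h1.sqrt (by positivity)
    have h3 := (((ha.hd x).add (hb.hd x)).sub h2).const_mul (1/2 : ℝ)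
    refine (h3.congr_fderiv ?_).congr_of_eventuallyEq (Filter.Eventually.of_forall fun y => ?_)
    · ext v
      simp [r, inner_add_left, inner_sub_left, inner_smul_left]
      ring
    · simp; ring
  · obtain ⟨K, hK, hl⟩ := ha.lip
    obtain ⟨K', hK', hl'⟩ := hb.lip
    refine ⟨K + K' + 4 / s, by positivity, fun x y => ?_⟩
    have e : (1/2 : ℝ) • (A x + B x) - (1/2 * r x) • (A x - B x)
        - ((1/2 : ℝ) • (A y + B y) - (1/2 * r y) • (A y - B y))
        = (1/2 * (1 - r x)) • (A x - A y) + (1/2 * (1 + r x)) • (B x - B y)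
          - (1/2 * (r x - r y)) • (A y - B y) := by
      module
    rw [e]
    have hr := abs_le.1 (hrn x)
    have n1 : ‖(1/2 * (1 - r x)) • (A x - A y)‖ ≤ 1 * (K * ‖x - y‖) := by
      rw [norm_smul, Real.norm_of_nonneg (by linarith)]
      gcongr
      · linarith
      · exact hl x y
    have n2 : ‖(1/2 * (1 + r x)) • (B x - B y)‖ ≤ 1 * (K' * ‖x - y‖) := by
      rw [norm_smul, Real.norm_of_nonneg (by linarith)]
      gcongr
      · linarith
      · exact hl' x y
    have n3 : ‖(1/2 * (r x - r y)) • (A y - B y)‖ ≤ (1/2 * (4 / s * ‖x - y‖)) * 2 := by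
      rw [norm_smul, norm_mul, Real.norm_of_nonneg (by norm_num : (0:ℝ) ≤ 1/2), Real.norm_eq_abs]
      gcongr
      · exact hrl x y
      · refine (norm_sub_le _ _).trans ?_
        linarith [ha.bd y, hb.bd y]
    refine (norm_sub_le _ _).trans ?_
    have n4 := norm_add_le ((1/2 * (1 - r x)) • (A x - A y)) ((1/2 * (1 + r x)) • (B x - B y))
    linarith
  · have e : (1/2 : ℝ) • (A x + B x) - (1/2 * r x) • (A x - B x)
        = (1/2 * (1 - r x)) • (A x) + (1/2 * (1 + r x)) • (B x) := by module
    rw [e]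
    have hr := abs_le.1 (hrn x)
    refine (norm_add_le _ _).trans ?_
    rw [norm_smul, norm_smul, Real.norm_of_nonneg (by linarith), Real.norm_of_nonneg (by linarith)]
    have h1 := mul_le_mul_of_nonneg_left (ha.bd x) (show 0 ≤ 1/2 * (1 - r x) by linarith)
    have h2 := mul_le_mul_of_nonneg_left (hb.bd x) (show 0 ≤ 1/2 * (1 + r x) by linarith)
    linarith

theorem smooth_approx0 (φ : X → ℝ) (hφ : ∀ x y, |φ x - φ y| ≤ ‖x - y‖) (P : Finset X) :
    ∀ ε > 0, ∃ f G, SmoothPair f G ∧ (∀ p ∈ insert 0 (P : Set X), f p ≤ φ p + ε) ∧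
      ∀ x, φ x - ε ≤ f x := by
  classical
  have base : ∀ (p : X), ∀ s > 0, ∃ f G, SmoothPair f G ∧ f p ≤ φ p + s ∧ ∀ x, φ x ≤ f x := by
    intro p s hs
    refine ⟨_, _, (smooth_norm p hs).add_const (φ p), ?_, fun x => ?_⟩
    · have := sqrt_le_norm_add (p - p) hs
      rw [sub_self, norm_zero] at *
      linarith
    · have h1 := sqrt_ge_norm (x - p) s
      have h2 := abs_le.1 (hφ x p)
      linarith [h2.2]
  induction P using Finset.induction_on with
  | empty =>
    intro ε hε
    obtain ⟨f, G, h1, h2, h3⟩ := base 0 ε hε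
    refine ⟨f, G, h1, ?_, fun x => by linarith [h3 x]⟩
    intro p hp
    simp at hp
    rwa [hp]
  | insert q P hq ih =>
    intro ε hε
    obtain ⟨f, G, h1, h2, h3⟩ := ih (ε/2) (by positivity)
    obtain ⟨g, H, k1, k2, k3⟩ := base q (ε/2) (by positivity)
    obtain ⟨Gm, hm⟩ := smooth_min h1 k1 (half_pos hε)
    refine ⟨_, Gm, hm, ?_, ?_⟩
    · have hle : ∀ x, (f x + g x - √((f x - g x) ^ 2 + (ε/2) ^ 2)) / 2 ≤ min (f x) (g x) := by
        intro x
        have h5 := sqrt_ge_norm (f x - g x) (ε/2)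
        rw [Real.norm_eq_abs, sq_abs] at h5
        have := abs_le.1 h5
        apply le_min <;> linarith [this.1, this.2]
      intro p hp
      refine (hle p).trans ?_
      simp only [Finset.coe_insert, mem_insert_iff] at hp
      rcases hp with hp | hp | hp
      · have := h2 p (Or.inl hp)
        exact (min_le_left _ _).trans (by linarith)
      · subst hp
        exact (min_le_right _ _).trans (by linarith)
      · have := h2 p (Or.inr hp)
        exact (min_le_left _ _).trans (by linarith)
    · intro x
      have h5 := sqrt_le_norm_add (f x - g x) (half_pos hε)
      rw [Real.norm_eq_abs, sq_abs] at h5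
      have h6 := h3 x
      have h7 := k3 x
      rcases le_total 0 (f x - g x) with h | h
      · rw [abs_of_nonneg h] at h5; linarith
      · rw [abs_of_nonpos h] at h5; linarith

theorem smooth_approx (φ : X → ℝ) (hφ : ∀ x y, |φ x - φ y| ≤ ‖x - y‖) (h0 : φ 0 = 0)
    (P : Finset X) (ε : ℝ) (hε : 0 < ε) :
    ∃ f G, SmoothPair f G ∧ f 0 = 0 ∧ ∀ p ∈ P, |f p - φ p| ≤ ε := by
  obtain ⟨f, G, h1, h2, h3⟩ := smooth_approx0 φ hφ P (ε/2) (by positivity)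
  refine ⟨_, G, h1.add_const (-f 0), by simp, fun p hp => ?_⟩
  have a1 := h2 0 (Or.inl rfl)
  have a2 := h3 0
  have a3 := h2 p (Or.inr hp)
  have a4 := h3 p
  rw [h0] at a1 a2
  rw [abs_le]
  constructor <;> linarith

end Smooth

section Repr
set_option linter.unusedSectionVars false
variable {X : Type*} [NormedAddCommGroup X] [NormedSpace ℝ X] {F : Type*} [NormedAddCommGroup F]
  [NormedSpace ℝ F] {δ : X → F}

/-- the local Lipschitz constant of `g` is at most `w` at each point. -/
def LocLip (g w : X → ℝ) : Prop :=
  ∀ z, ∀ η > 0, ∀ᶠ q : X × X in 𝓝 (z, z), |g q.1 - g q.2| ≤ (w z + η) * ‖q.1 - q.2‖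

theorem LocLip.continuous {g w : X → ℝ} (h : LocLip g w) : Continuous g := by
  rw [continuous_iff_continuousAt]
  intro z
  have h1 := h z 1 one_pos
  have h2 : Tendsto (fun x : X => (x, z)) (𝓝 z) (𝓝 (z, z)) := by
    have : Continuous (fun x : X => (x, z)) := by fun_prop
    exact this.tendsto z
  have h3 := h2.eventually h1
  rw [ContinuousAt, tendsto_iff_dist_tendsto_zero]
  have h4 : Tendsto (fun x : X => (w z + 1) * ‖x - z‖) (𝓝 z) (𝓝 0) := by
    have : Continuous (fun x : X => (w z + 1) * ‖x - z‖) := by fun_prop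
    simpa using this.tendsto z
  refine squeeze_zero' (Eventually.of_forall fun x => dist_nonneg) ?_ h4
  filter_upwards [h3] with x hx
  rwa [Real.dist_eq]

theorem LocLip.path {g w : X → ℝ} (h : LocLip g w) (hw : Continuous w) (p q : X) :
    |g p - g q| ≤ ‖p - q‖ * ∫ t in (0:ℝ)..1, w (q + t • (p - q)) := by
  have hg := h.continuous
  let c : ℝ → X := fun t => q + t • (p - q)
  have hc : Continuous c := by fun_prop
  have hwc : Continuous (fun t => w (c t)) := hw.comp hc
  have key := image_le_of_liminf_slope_right_le_deriv_boundary (a := 0) (b := 1)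
    (f := fun t => |g (c t) - g q|) (B := fun t => ‖p - q‖ * ∫ s in (0:ℝ)..t, w (c s))
    (B' := fun t => ‖p - q‖ * w (c t))
    (by apply Continuous.continuousOn; fun_prop) (by simp [c])
    (by
      apply Continuous.continuousOn
      exact continuous_const.mul (intervalIntegral.continuous_primitive
        (fun a b => hwc.intervalIntegrable a b) 0))
    (by
      intro t _
      exact ((hwc.integral_hasStrictDerivAt 0 t).hasDerivAt.const_mul _).hasDerivWithinAt)
    (by
      intro t _ r hr
      apply Eventually.frequently
      have hη : 0 < (r - ‖p - q‖ * w (c t)) / (‖p - q‖ + 1) := by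
        apply div_pos
        · simpa using hr
        · positivity
      set η := (r - ‖p - q‖ * w (c t)) / (‖p - q‖ + 1) with hηd
      have h1 := h (c t) η hη
      have h2 : Tendsto (fun z : ℝ => (c z, c t)) (𝓝[>] t) (𝓝 (c t, c t)) := by
        have : Continuous (fun z : ℝ => (c z, c t)) := by fun_prop
        exact (this.tendsto t).mono_left nhdsWithin_le_nhds
      filter_upwards [h2.eventually h1, self_mem_nhdsWithin] with z hz hzt
      have hzt' : 0 < z - t := sub_pos.2 hzt
      rw [slope_def_field, div_lt_iff₀ hzt']
      have h3 : |g (c z) - g q| - |g (c t) - g q| ≤ |g (c z) - g (c t)| := by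
        have := abs_sub_abs_le_abs_sub (g (c z) - g q) (g (c t) - g q)
        rwa [sub_sub_sub_cancel_right] at this
      have h4 : c z - c t = (z - t) • (p - q) := by
        simp only [c]; module
      rw [h4, norm_smul, Real.norm_of_nonneg hzt'.le] at hz
      refine lt_of_le_of_lt (h3.trans hz) ?_
      have h5 : η * (‖p - q‖ + 1) = r - ‖p - q‖ * w (c t) := by
        rw [hηd]; field_simp
      have h6 : (w (c t) + η) * ‖p - q‖ < r := by nlinarith
      calc (w (c t) + η) * ((z - t) * ‖p - q‖) = ((w (c t) + η) * ‖p - q‖) * (z - t) := by ring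
        _ < r * (z - t) := by gcongr)
  have := key (x := 1) (by simp)
  simpa [c] using this

theorem LocLip.lip {g : X → ℝ} {C : ℝ} (h : LocLip g (fun _ => C)) (p q : X) :
    |g p - g q| ≤ C * ‖p - q‖ := by
  have := h.path continuous_const p q
  simpa [mul_comm] using this

structure PosFun (ν : (X → ℝ) → ℝ) (M : ℝ) : Prop where
  add : ∀ u v : X → ℝ, Continuous u → Continuous v → ν (fun x => u x + v x) = ν u + ν v
  smul : ∀ (c : ℝ) (u : X → ℝ), Continuous u → ν (fun x => c * u x) = c * ν u
  mono : ∀ u v : X → ℝ, Continuous u → Continuous v → (∀ x, u x ≤ v x) → ν u ≤ ν v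
  one : ν (fun _ => 1) ≤ M

def FreeRep (δ : X → F) (M : ℝ) (x : F) (P : Finset X) (ν : (X → ℝ) → ℝ) : Prop :=
  PosFun ν M ∧
    (∀ (φ : F →L[ℝ] ℝ) (w : X → ℝ), Continuous w → LocLip (fun z => φ (δ z)) w → |φ x| ≤ ν w) ∧
    ∃ C : ℝ, 0 ≤ C ∧ ∀ (φ ψ : F →L[ℝ] ℝ) (ε : ℝ), 0 ≤ ε →
      (∀ p ∈ P, |φ (δ p) - ψ (δ p)| ≤ ε) → |φ x - ψ x| ≤ C * ε

theorem rep_zero {M : ℝ} (hM : 0 ≤ M) : FreeRep δ M 0 ∅ (fun _ => 0) := by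
  refine ⟨⟨fun _ _ _ _ => by simp, fun _ _ _ => by simp, fun _ _ _ _ _ => le_rfl, hM⟩,
    fun φ w _ _ => by simp, 0, le_rfl, fun φ ψ ε _ _ => by simp⟩

theorem rep_convex (δ : X → F) (M : ℝ) : Convex ℝ {x : F | ∃ P ν, FreeRep δ M x P ν} := by
  classical
  rintro x ⟨P, ν, ⟨h1, h2, C, hC, h3⟩⟩ y ⟨P', ν', ⟨k1, k2, C', hC', k3⟩⟩ a b ha hb hab
  refine ⟨P ∪ P', fun w => a * ν w + b * ν' w, ⟨⟨?_, ?_, ?_, ?_⟩, ?_, a * C + b * C', by positivity, ?_⟩⟩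
  · intro u v hu hv
    beta_reduce
    rw [h1.add u v hu hv, k1.add u v hu hv]; ring
  · intro c u hu
    beta_reduce
    rw [h1.smul c u hu, k1.smul c u hu]; ring
  · intro u v hu hv huv
    have := h1.mono u v hu hv huv
    have := k1.mono u v hu hv huv
    beta_reduce
    gcongr
  · have e1 := mul_le_mul_of_nonneg_left h1.one ha
    have e2 := mul_le_mul_of_nonneg_left k1.one hb
    have e3 : a * M + b * M = M := by rw [← add_mul, hab, one_mul]
    beta_reduce
    linarith
  · intro φ w hw hl
    rw [map_add, map_smul, map_smul, smul_eq_mul, smul_eq_mul]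
    refine (abs_add_le _ _).trans ?_
    rw [abs_mul, abs_mul, abs_of_nonneg ha, abs_of_nonneg hb]
    have := h2 φ w hw hl
    have := k2 φ w hw hl
    beta_reduce
    gcongr
  · intro φ ψ ε hε hp
    have e1 := h3 φ ψ ε hε fun p hp' => hp p (Finset.mem_union_left _ hp')
    have e2 := k3 φ ψ ε hε fun p hp' => hp p (Finset.mem_union_right _ hp')
    have : φ (a • x + b • y) - ψ (a • x + b • y) = a * (φ x - ψ x) + b * (φ y - ψ y) := by
      simp only [map_add, map_smul, smul_eq_mul]; ring
    rw [this]
    refine (abs_add_le _ _).trans ?_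
    rw [abs_mul, abs_mul, abs_of_nonneg ha, abs_of_nonneg hb, add_mul, mul_assoc, mul_assoc]
    gcongr

theorem rep_molecule (δ : X → F) {M : ℝ} (hM : 0 ≤ M) (p q : X) (hpq : p ≠ q) :
    ∃ P ν, FreeRep δ M ((M * ‖p - q‖⁻¹) • (δ p - δ q)) P ν := by
  classical
  have hpos : 0 < ‖p - q‖ := norm_pos_iff.2 (sub_ne_zero.2 hpq)
  have hI : ∀ u : X → ℝ, Continuous u →
      IntervalIntegrable (fun t : ℝ => u (q + t • (p - q))) MeasureTheory.volume 0 1 := fun u hu =>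
    Continuous.intervalIntegrable (by fun_prop) _ _
  refine ⟨{p, q}, fun w => M * ∫ t in (0:ℝ)..1, w (q + t • (p - q)), ⟨⟨?_, ?_, ?_, ?_⟩, ?_,
    2 * (M * ‖p - q‖⁻¹), by positivity, ?_⟩⟩
  · intro u v hu hv
    beta_reduce
    rw [intervalIntegral.integral_add (hI u hu) (hI v hv), mul_add]
  · intro c u hu
    beta_reduce
    rw [intervalIntegral.integral_const_mul]; ring
  · intro u v hu hv huv
    beta_reduce
    gcongr
    exact intervalIntegral.integral_mono_on zero_le_one (hI u hu) (hI v hv) (fun t _ => huv _)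
  · simp
  · intro φ w hw hl
    have := hl.path hw p q
    rw [map_smul, smul_eq_mul, abs_mul, abs_of_nonneg (by positivity), map_sub, mul_assoc]
    beta_reduce
    gcongr
    rw [inv_mul_le_iff₀ hpos]
    exact this
  · intro φ ψ ε hε hp
    have e1 := hp p (by simp)
    have e2 := hp q (by simp)
    have : φ ((M * ‖p - q‖⁻¹) • (δ p - δ q)) - ψ ((M * ‖p - q‖⁻¹) • (δ p - δ q))
      = (M * ‖p - q‖⁻¹) * ((φ (δ p) - ψ (δ p)) - (φ (δ q) - ψ (δ q))) := by
      simp only [map_smul, map_sub, smul_eq_mul]; ring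
    rw [this, abs_mul, abs_of_nonneg (by positivity)]
    have e3 := abs_sub (φ (δ p) - ψ (δ p)) (φ (δ q) - ψ (δ q))
    calc (M * ‖p - q‖⁻¹) * |(φ (δ p) - ψ (δ p)) - (φ (δ q) - ψ (δ q))|
        ≤ (M * ‖p - q‖⁻¹) * (2 * ε) := by gcongr; linarith
      _ = _ := by ring

theorem rep_exists (hδ : IsLipschitzFree (0 : X) δ) {M : ℝ} (hM : 0 < M) (x : F) (hx : ‖x‖ ≤ M)
    (η : ℝ) (hη : 0 < η) : ∃ x' P ν, ‖x - x'‖ ≤ η ∧ FreeRep δ M x' P ν := by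
  have hmem : x ∈ closure {x : F | ∃ P ν, FreeRep δ M x P ν} := by
    by_contra hnot
    obtain ⟨f, u, hf, hu⟩ := geometric_hahn_banach_closed_point (rep_convex δ M).closure
      isClosed_closure hnot
    have h0 : 0 < u := by
      have := hf 0 (subset_closure ⟨∅, _, rep_zero hM.le⟩)
      rwa [map_zero] at this
    have key : ∀ p q, f (δ p) - f (δ q) ≤ u / M * ‖p - q‖ := by
      intro p q
      rcases eq_or_ne p q with rfl | hpq
      · simp
      have hpos : 0 < ‖p - q‖ := norm_pos_iff.2 (sub_ne_zero.2 hpq)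
      have := hf _ (subset_closure (rep_molecule δ hM.le p q hpq))
      rw [map_smul, smul_eq_mul, map_sub] at this
      have h2 : M * ‖p - q‖⁻¹ * (f (δ p) - f (δ q)) * (‖p - q‖ / M) = f (δ p) - f (δ q) := by
        field_simp
      rw [← h2]
      calc M * ‖p - q‖⁻¹ * (f (δ p) - f (δ q)) * (‖p - q‖ / M) ≤ u * (‖p - q‖ / M) := by gcongr
        _ = _ := by ring
    have hn : ‖f‖ ≤ u / M := by
      apply free_norm_le hδ _ _ (by positivity)
      intro p q
      rw [abs_le]
      have h1 := key p q
      have h2 := key q p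
      rw [norm_sub_rev] at h2
      constructor <;> linarith
    have h3 : f x ≤ ‖f‖ * ‖x‖ := (le_abs_self _).trans (f.le_opNorm x)
    have h4 : ‖f‖ * ‖x‖ ≤ u / M * M := by gcongr
    rw [div_mul_cancel₀ _ hM.ne'] at h4
    linarith
  obtain ⟨x', ⟨P, ν, hr⟩, hd⟩ := Metric.mem_closure_iff.1 hmem η hη
  exact ⟨x', P, ν, by rw [← dist_eq_norm]; exact hd.le, hr⟩

end Repr

section Minim

/-- approximability of `u` with energy at most `t`. -/
def EApprox {X ι : Type*} (val : ι → X → ℝ) (Q : ι → ℝ) (u : X → ℝ) (t : ℝ) : Prop :=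
  ∀ (P : Finset X) (ε : ℝ), 0 < ε → ∃ i, (∀ p ∈ P, |val i p - u p| ≤ ε) ∧ Q i ≤ t

theorem minim {X ι : Type*} (val : ι → X → ℝ) (Q : ι → ℝ) (mid dif : ι → ι → ι) (B : ℝ)
    (hQ0 : ∀ i, 0 ≤ Q i) (hQB : ∀ i, Q i ≤ B)
    (hmid : ∀ i j x, val (mid i j) x = (val i x + val j x) / 2)
    (hpar : ∀ i j, Q (mid i j) + Q (dif i j) = (Q i + Q j) / 2)
    (C : ℕ → Set (X → ℝ)) (hne : ∀ n, (C n).Nonempty) (hanti : ∀ n m, n ≤ m → C m ⊆ C n)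
    (hconv : ∀ n, ∀ u ∈ C n, ∀ v ∈ C n, (fun x => (u x + v x) / 2) ∈ C n)
    (happ : ∀ n, ∀ u ∈ C n, ∀ (P : Finset X) (ε : ℝ), 0 < ε → ∃ i, ∀ p ∈ P, |val i p - u p| ≤ ε)
    (η : ℝ) (hη : 0 < η) :
    ∃ u ∈ C 0, ∀ m, ∃ v ∈ C m, ∀ (P : Finset X) (ε : ℝ), 0 < ε → ∃ i j,
      (∀ p ∈ P, |val i p - u p| ≤ ε) ∧ (∀ p ∈ P, |val j p - v p| ≤ ε) ∧ Q (dif i j) ≤ 3 * η := by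
  classical
  let T : ℕ → Set ℝ := fun n => {t | ∃ u ∈ C n, EApprox val Q u t}
  have hT0 : ∀ n, ∀ t ∈ T n, 0 ≤ t := by
    rintro n t ⟨u, hu, h⟩
    obtain ⟨i, -, hi⟩ := h ∅ 1 one_pos
    exact (hQ0 i).trans hi
  have hTb : ∀ n, BddBelow (T n) := fun n => ⟨0, fun t ht => hT0 n t ht⟩
  have hTB : ∀ n, B ∈ T n := by
    intro n
    obtain ⟨u, hu⟩ := hne n
    refine ⟨u, hu, fun P ε hε => ?_⟩
    obtain ⟨i, hi⟩ := happ n u hu P ε hε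
    exact ⟨i, hi, hQB i⟩
  have hTanti : ∀ n m, n ≤ m → T m ⊆ T n := by
    rintro n m hnm t ⟨u, hu, h⟩
    exact ⟨u, hanti n m hnm hu, h⟩
  let I : ℕ → ℝ := fun n => sInf (T n)
  have hImono : ∀ n m, n ≤ m → I n ≤ I m := fun n m hnm =>
    csInf_le_csInf (hTb n) ⟨B, hTB m⟩ (hTanti n m hnm)
  have hIB : BddAbove (range I) := ⟨B, by rintro _ ⟨n, rfl⟩; exact csInf_le (hTb n) (hTB n)⟩
  obtain ⟨_, ⟨n, rfl⟩, hn⟩ := exists_lt_of_lt_csSup (range_nonempty I) (sub_lt_self (sSup (range I)) hη)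
  have hnm : ∀ m, I m ≤ I n + η := fun m => by
    have := le_csSup hIB (mem_range_self m)
    linarith
  obtain ⟨t, ⟨u, hu, hut⟩, htn⟩ := exists_lt_of_csInf_lt ⟨B, hTB n⟩ (lt_add_of_pos_right (I n) hη)
  refine ⟨u, hanti 0 n (Nat.zero_le _) hu, fun m => ?_⟩
  obtain ⟨s, ⟨v, hv, hvs⟩, hsm⟩ := exists_lt_of_csInf_lt ⟨B, hTB (max m n)⟩
    (lt_add_of_pos_right (I (max m n)) hη)
  have hs : s ≤ I n + 2 * η := by have := hnm (max m n); linarith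
  refine ⟨v, hanti _ _ (le_max_left m n) hv, fun P ε hε => ?_⟩
  have hvn := hanti _ _ (le_max_right m n) hv
  have hnot : ¬ EApprox val Q (fun x => (u x + v x) / 2) (I n - η) := by
    intro h
    have : I n ≤ I n - η := csInf_le (hTb n) ⟨_, hconv n u hu v hvn, h⟩
    linarith
  unfold EApprox at hnot
  push Not at hnot
  obtain ⟨P0, ε0, hε0, hP0⟩ := hnot
  obtain ⟨i, hi, hiQ⟩ := hut (P ∪ P0) (min ε ε0) (lt_min hε hε0)
  obtain ⟨j, hj, hjQ⟩ := hvs (P ∪ P0) (min ε ε0) (lt_min hε hε0)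
  refine ⟨i, j, fun p hp => (hi p (Finset.mem_union_left _ hp)).trans (min_le_left _ _),
    fun p hp => (hj p (Finset.mem_union_left _ hp)).trans (min_le_left _ _), ?_⟩
  have h1 := hP0 (mid i j) (by
    intro p hp
    have e1 := (hi p (Finset.mem_union_right _ hp)).trans (min_le_right _ _)
    have e2 := (hj p (Finset.mem_union_right _ hp)).trans (min_le_right _ _)
    rw [abs_le] at e1 e2
    rw [hmid, abs_le]
    constructor <;> linarith [e1.1, e1.2, e2.1, e2.2])
  have h2 := hpar i j
  linarith

end Minim

section Step
set_option linter.unusedSectionVars false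
variable {X : Type*} [NormedAddCommGroup X] [InnerProductSpace ℝ X] {F : Type*}
  [NormedAddCommGroup F] [NormedSpace ℝ F] {δ : X → F}

theorem ultra_lim (U : Ultrafilter ℕ) (a : ℕ → ℝ) (M : ℝ) (h0 : ∀ k, 0 ≤ a k) (hM : ∀ k, a k ≤ M) :
    ∃ l, 0 ≤ l ∧ l ≤ M ∧ Tendsto a U (𝓝 l) := by
  have h : ((U.map a : Ultrafilter ℝ) : Filter ℝ) ≤ 𝓟 (Icc 0 M) := by
    rw [le_principal_iff]
    exact Filter.univ_mem' (f := (U : Filter ℕ)) (fun k => ⟨h0 k, hM k⟩)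
  obtain ⟨l, hl, hl2⟩ := (isCompact_Icc (a := (0:ℝ)) (b := M)).ultrafilter_le_nhds (U.map a) h
  exact ⟨l, hl.1, hl.2, hl2⟩

/-- the index set of normalized smooth pairs. -/
def SPair (X : Type*) [NormedAddCommGroup X] [InnerProductSpace ℝ X] : Type _ :=
  {p : (X → ℝ) × (X → X) // SmoothPair p.1 p.2 ∧ p.1 0 = 0}

def SPair.comb (p q : SPair X) (a b : ℝ) (h : |a| + |b| ≤ 1) : SPair X :=
  ⟨(fun x => a * p.1.1 x + b * q.1.1 x, fun x => a • p.1.2 x + b • q.1.2 x),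
    p.2.1.comb q.2.1 a b h, by simp [p.2.2, q.2.2]⟩

theorem energy_bounds {ν : (X → ℝ) → ℝ} {M : ℝ} (hν : PosFun ν M) (p : SPair X) :
    0 ≤ ν (fun x => ‖p.1.2 x‖ ^ 2) ∧ ν (fun x => ‖p.1.2 x‖ ^ 2) ≤ M := by
  have hc : Continuous (fun x => ‖p.1.2 x‖ ^ 2) := (p.2.1.continuous_grad.norm).pow 2
  constructor
  · have h1 := hν.smul 0 (fun _ => 1) continuous_const
    have h2 := hν.mono (fun x => 0 * 1) _ (by fun_prop) hc (fun x => by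
      have := sq_nonneg ‖p.1.2 x‖; simpa using this)
    rw [h1] at h2
    simpa using h2
  · refine le_trans (hν.mono _ (fun _ => 1) hc continuous_const fun x => ?_) hν.one
    have := p.2.1.bd x
    have h0 := norm_nonneg (p.1.2 x)
    nlinarith

theorem energy_par {ν : (X → ℝ) → ℝ} {M : ℝ} (hν : PosFun ν M) (p q : SPair X)
    (h1 : |(1/2:ℝ)| + |(1/2:ℝ)| ≤ 1) (h2 : |(1/2:ℝ)| + |(-(1/2):ℝ)| ≤ 1) :
    ν (fun x => ‖(p.comb q (1/2) (1/2) h1).1.2 x‖ ^ 2)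
      + ν (fun x => ‖(p.comb q (1/2) (-(1/2)) h2).1.2 x‖ ^ 2)
      = (ν (fun x => ‖p.1.2 x‖ ^ 2) + ν (fun x => ‖q.1.2 x‖ ^ 2)) / 2 := by
  have hc : ∀ p : SPair X, Continuous (fun x => ‖p.1.2 x‖ ^ 2) :=
    fun p => (p.2.1.continuous_grad.norm).pow 2
  rw [← hν.add _ _ (hc _) (hc _), ← hν.add _ _ (hc _) (hc _)]
  refine Eq.trans ?_ ((hν.smul (1/2) (fun x => ‖p.1.2 x‖ ^ 2 + ‖q.1.2 x‖ ^ 2) ((hc p).add (hc q))).trans (by ring))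
  congr 1
  ext x
  have := parallelogram_law_with_norm ℝ ((1/2:ℝ) • p.1.2 x) ((1/2:ℝ) • q.1.2 x)
  simp only [SPair.comb]
  rw [neg_smul, ← sub_eq_add_neg]
  rw [norm_smul, norm_smul] at this
  norm_num at this ⊢
  nlinarith

/-- limiting energy -/
def energy (U : Ultrafilter ℕ) (ν : ℕ → (X → ℝ) → ℝ) (E : Finset X) (p : SPair X) : ℝ :=
  limUnder (U : Filter ℕ) (fun k => ν k (fun x => ‖p.1.2 x‖ ^ 2)) + ∑ e ∈ E, (p.1.1 e) ^ 2

theorem step_lemma {M θ τ : ℝ} (U : Ultrafilter ℕ) (hU : ∀ a : ℕ, ∀ᶠ k in (U : Filter ℕ), a ≤ k)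
    (hτ : 0 < τ)
    (φ : ℕ → F →L[ℝ] ℝ) (x x' : ℕ → F) (P : ℕ → Finset X) (ν : ℕ → (X → ℝ) → ℝ)
    (hδ : IsLipschitzFree (0 : X) δ)
    (hφ : ∀ i, ‖φ i‖ ≤ 1) (h1 : ∀ i k, i ≤ k → θ ≤ φ i (x k)) (h2 : ∀ i k, k < i → φ i (x k) = 0)
    (hx : ∀ k, ‖x k - x' k‖ ≤ τ) (hr : ∀ k, FreeRep δ M (x' k) (P k) (ν k))
    (E : Finset X) (η : ℝ) (hη : 0 < η) (S0 : ℕ → Prop) (hS0 : ∀ᶠ k in (U : Filter ℕ), S0 k) :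
    ∃ f G, SmoothPair f G ∧ f 0 = 0 ∧ (∀ e ∈ E, |f e| ≤ η) ∧
      (∀ᶠ k in (U : Filter ℕ), ν k (fun x => ‖G x‖ ^ 2) < η) ∧
      ∃ k, S0 k ∧ ∀ ψ : F →L[ℝ] ℝ, (∀ z, ψ (δ z) = f z) → θ / 2 - 2 * τ ≤ ψ (x' k) := by
  classical
  have hlim : ∀ p : SPair X, ∃ l, 0 ≤ l ∧ l ≤ M ∧
      Tendsto (fun k => ν k (fun x => ‖p.1.2 x‖ ^ 2)) U (𝓝 l) := fun p =>
    ultra_lim U _ M (fun k => (energy_bounds (hr k).1 p).1) (fun k => (energy_bounds (hr k).1 p).2)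
  choose l hl0 hlM hl using hlim
  have hen : ∀ p, energy U ν E p = l p + ∑ e ∈ E, (p.1.1 e) ^ 2 := fun p => by
    rw [energy, (hl p).limUnder_eq]
  have c1 : |(1/2:ℝ)| + |(1/2:ℝ)| ≤ 1 := by norm_num [abs_of_pos]
  have c2 : |(1/2:ℝ)| + |(-(1/2):ℝ)| ≤ 1 := by rw [abs_neg]; exact c1
  let D : ℕ → Set (F →L[ℝ] ℝ) := fun n => convexHull ℝ (φ '' {i | n ≤ i})
  have hD1 : ∀ n, ∀ ψ ∈ D n, ‖ψ‖ ≤ 1 := by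
    intro n ψ hψ
    have : D n ⊆ closedBall 0 1 := convexHull_min (by
      rintro _ ⟨i, -, rfl⟩
      simpa using hφ i) (convex_closedBall _ _)
    simpa using this hψ
  have hD2 : ∀ n, ∀ ψ ∈ D n, ∀ k < n, ψ (x k) = 0 := by
    intro n ψ hψ
    have : D n ⊆ {ψ | ∀ k < n, ψ (x k) = 0} := convexHull_min (by
      rintro _ ⟨i, hi, rfl⟩ k hk
      exact h2 i k (lt_of_lt_of_le hk hi)) (by
      intro ψ1 e1 ψ2 e2 a b ha hb hab k hk
      simp [e1 k hk, e2 k hk])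
    exact this hψ
  have hD3 : ∀ ψ ∈ D 0, ∃ a, ∀ k, a ≤ k → θ ≤ ψ (x k) := by
    intro ψ hψ
    have : D 0 ⊆ {ψ | ∃ a, ∀ k, a ≤ k → θ ≤ ψ (x k)} := convexHull_min (by
      rintro _ ⟨i, hi, rfl⟩
      exact ⟨i, fun k hk => h1 i k hk⟩) (by
      rintro ψ1 ⟨a1, e1⟩ ψ2 ⟨a2, e2⟩ a b ha hb hab
      refine ⟨max a1 a2, fun k hk => ?_⟩
      have f1 := e1 k ((le_max_left _ _).trans hk)
      have f2 := e2 k ((le_max_right _ _).trans hk)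
      have f3 : θ = a * θ + b * θ := by rw [← add_mul, hab, one_mul]
      simp only [_root_.add_apply, _root_.smul_apply, smul_eq_mul]
      rw [f3]
      gcongr)
    exact this hψ
  let C : ℕ → Set (X → ℝ) := fun n => (fun (ψ : F →L[ℝ] ℝ) z => ψ (δ z)) '' D n
  have hη' : 0 < min η (η ^ 2) / 6 := by positivity
  obtain ⟨_, ⟨u, hu, rfl⟩, hmin⟩ := minim (fun (p : SPair X) => p.1.1) (energy U ν E)
    (fun p q => p.comb q (1/2) (1/2) c1) (fun p q => p.comb q (1/2) (-(1/2)) c2)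
    (M + ∑ e ∈ E, ‖e‖ ^ 2)
    (by
      intro p
      rw [hen]
      have := hl0 p
      positivity)
    (by
      intro p
      rw [hen]
      refine add_le_add (hlM p) (Finset.sum_le_sum fun e _ => ?_)
      have := p.2.1.lip1 e 0
      rw [p.2.2, sub_zero, sub_zero] at this
      rw [← sq_abs (p.1.1 e)]
      gcongr)
    (by
      intro p q z
      simp only [SPair.comb]; ring)
    (by
      intro p q
      have e1 : l (p.comb q (1/2) (1/2) c1) + l (p.comb q (1/2) (-(1/2)) c2) = (l p + l q) / 2 := by
        have t1 := (hl (p.comb q (1/2) (1/2) c1)).add (hl (p.comb q (1/2) (-(1/2)) c2))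
        have t2 := ((hl p).add (hl q)).div_const 2
        refine tendsto_nhds_unique t1 (t2.congr fun k => ?_)
        exact (energy_par (hr k).1 p q c1 c2).symm
      have e2 : ∑ e ∈ E, ((p.comb q (1/2) (1/2) c1).1.1 e) ^ 2
          + ∑ e ∈ E, ((p.comb q (1/2) (-(1/2)) c2).1.1 e) ^ 2
          = (∑ e ∈ E, (p.1.1 e) ^ 2 + ∑ e ∈ E, (q.1.1 e) ^ 2) / 2 := by
        rw [← Finset.sum_add_distrib, ← Finset.sum_add_distrib, Finset.sum_div]
        refine Finset.sum_congr rfl fun e _ => ?_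
        simp only [SPair.comb]; ring
      simp only [hen]
      linarith)
    C
    (fun n => ⟨_, φ n, subset_convexHull ℝ _ ⟨n, le_refl n, rfl⟩, rfl⟩)
    (fun n m hnm => image_mono (convexHull_mono (image_mono fun i hi => le_trans hnm hi)))
    (by
      rintro n _ ⟨u, hu, rfl⟩ _ ⟨v, hv, rfl⟩
      refine ⟨(1/2:ℝ) • u + (1/2:ℝ) • v, (convex_convexHull ℝ _) hu hv (by norm_num) (by norm_num)
        (by norm_num), ?_⟩
      ext z
      simp only [_root_.add_apply, _root_.smul_apply, smul_eq_mul]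
      ring)
    (by
      rintro n _ ⟨u, hu, rfl⟩ P ε hε
      obtain ⟨f, G, hs, h0, hP⟩ := smooth_approx (fun z => u (δ z)) (by
        intro z w
        have := free_dual_lip hδ u z w
        refine this.trans ?_
        have := hD1 n u hu
        have h3 := norm_nonneg (z - w)
        nlinarith) (by simp [hδ.map_base]) P ε hε
      exact ⟨⟨(f, G), hs, h0⟩, hP⟩)
    _ hη'
  obtain ⟨a, ha⟩ := hD3 u hu
  obtain ⟨k, hk0, hka⟩ := (hS0.and (hU a)).exists
  obtain ⟨_, ⟨v, hv, rfl⟩, hmin2⟩ := hmin (k + 1)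
  obtain ⟨-, -, K, hK, hrep⟩ := hr k
  obtain ⟨i, j, hi, hj, hQ⟩ := hmin2 (P k) (τ / (K + 1)) (by positivity)
  rw [hen] at hQ
  have hQ' : l (i.comb j (1/2) (-(1/2)) c2)
      + ∑ e ∈ E, ((i.comb j (1/2) (-(1/2)) c2).1.1 e) ^ 2 < min η (η ^ 2) := by
    have : 0 < min η (η ^ 2) := by positivity
    linarith
  generalize hpc : i.comb j (1/2) (-(1/2)) c2 = pc at hQ hQ'
  refine ⟨pc.1.1, pc.1.2, pc.2.1, pc.2.2, ?_, ?_, k, hk0, ?_⟩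
  · intro e he
    have e1 := Finset.single_le_sum (f := fun e => (pc.1.1 e) ^ 2) (fun e _ => sq_nonneg _) he
    have e2 := hl0 pc
    have e3 := min_le_right η (η ^ 2)
    apply abs_le_of_sq_le_sq _ hη.le
    linarith
  · refine (hl pc).eventually_lt_const ?_
    have e2 : 0 ≤ ∑ e ∈ E, (pc.1.1 e) ^ 2 := Finset.sum_nonneg fun e _ => sq_nonneg _
    have e3 := min_le_left η (η ^ 2)
    linarith
  · intro ψ hψ
    have e1 := hrep ψ ((1/2:ℝ) • u - (1/2:ℝ) • v) (τ / (K + 1)) (by positivity) (by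
      intro p hp
      have f1 := hi p hp
      have f2 := hj p hp
      rw [hψ, ← hpc]
      simp only [SPair.comb, _root_.sub_apply, _root_.smul_apply, smul_eq_mul]
      rw [abs_le] at f1 f2 ⊢
      constructor <;> linarith [f1.1, f1.2, f2.1, f2.2])
    have e2 : K * (τ / (K + 1)) ≤ τ := by
      rw [mul_div_assoc', div_le_iff₀ (by positivity)]
      nlinarith
    have e3 := ha k hka
    have e4 := hD2 _ v hv k (Nat.lt_succ_self k)
    have e5 : |((1/2:ℝ) • u - (1/2:ℝ) • v) (x k - x' k)| ≤ 1 * τ := by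
      rw [← Real.norm_eq_abs]
      refine (ContinuousLinearMap.le_opNorm _ _).trans (mul_le_mul ?_ (hx k) (norm_nonneg _) zero_le_one)
      refine (norm_sub_le _ _).trans ?_
      rw [norm_smul, norm_smul]
      have := hD1 _ u hu
      have := hD1 _ v hv
      norm_num
      linarith
    rw [abs_le] at e1 e5
    simp only [_root_.sub_apply, _root_.smul_apply, smul_eq_mul, map_sub] at e1 e5
    have := e1.1
    have := e5.2
    linarith

end Step

section Final
set_option linter.unusedSectionVars false

section LL
variable {X : Type*} [NormedAddCommGroup X] [NormedSpace ℝ X]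

theorem LocLip.mono_fun {f g w : X → ℝ} (h : LocLip f w) (hg : ∀ p q, |g p - g q| ≤ |f p - f q|) :
    LocLip g w := fun z η hη => by
  filter_upwards [h z η hη] with q hq
  exact (hg _ _).trans hq

theorem LocLip.mono_weight {f w w' : X → ℝ} (h : LocLip f w) (hw : ∀ z, w z ≤ w' z) :
    LocLip f w' := fun z η hη => by
  filter_upwards [h z η hη] with q hq
  have := hw z
  exact hq.trans (by gcongr)

theorem LocLip.add {f g w w' : X → ℝ} (hf : LocLip f w) (hg : LocLip g w') :
    LocLip (fun x => f x + g x) (fun x => w x + w' x) := fun z η hη => by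
  filter_upwards [hf z (η/2) (by positivity), hg z (η/2) (by positivity)] with q h1 h2
  have e : f q.1 + g q.1 - (f q.2 + g q.2) = (f q.1 - f q.2) + (g q.1 - g q.2) := by ring
  rw [e]
  refine (abs_add_le _ _).trans ?_
  calc _ ≤ _ := add_le_add h1 h2
    _ = _ := by ring

theorem LocLip.sum {ι : Type*} (s : Finset ι) (c : ι → ℝ) (hc : ∀ i, |c i| ≤ 1) (g w : ι → X → ℝ)
    (h : ∀ i, LocLip (g i) (w i)) :
    LocLip (fun x => ∑ i ∈ s, c i * g i x) (fun x => ∑ i ∈ s, w i x) := by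
  classical
  induction s using Finset.induction_on with
  | empty =>
    intro z η hη
    refine Eventually.of_forall fun q => ?_
    simp only [Finset.sum_empty, sub_self, abs_zero, zero_add]
    positivity
  | insert a s ha ih =>
    simp only [Finset.sum_insert ha]
    refine LocLip.add ((h a).mono_fun fun p q => ?_) ih
    rw [← mul_sub, abs_mul]
    exact mul_le_of_le_one_left (abs_nonneg _) (hc a)

theorem LocLip.mul {f w h : X → ℝ} (hf : LocLip f w) (hw : ∀ z, 0 ≤ w z) {a L : ℝ} (hL : 0 ≤ L)
    (hfa : ∀ z, |f z| ≤ a) (hh : ∀ p q, |h p - h q| ≤ L * ‖p - q‖) (h0 : ∀ z, 0 ≤ h z) :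
    LocLip (fun x => f x * h x) (fun x => w x * h x + a * L) := fun z η hη => by
  have hwz := hw z
  have hhz := h0 z
  have hs : 0 < min 1 (η / (w z + h z + 1)) := lt_min one_pos (by positivity)
  set s := min 1 (η / (w z + h z + 1)) with hsd
  have hs1 : s ≤ 1 := min_le_left _ _
  have hs2 : s * (w z + h z + 1) ≤ η := by
    have := min_le_right 1 (η / (w z + h z + 1))
    rw [← hsd, le_div_iff₀ (by positivity)] at this
    exact this
  have hcont : Continuous h := (LipschitzWith.of_dist_le_mul (K := ⟨L, hL⟩) fun x y => by
    rw [dist_eq_norm, dist_eq_norm]; exact hh x y).continuous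
  have h3 : ∀ᶠ q : X × X in 𝓝 (z, z), h q.1 < h z + s := by
    have : Continuous fun q : X × X => h q.1 := by fun_prop
    exact (this.tendsto (z, z)).eventually_lt_const (by simpa using hs)
  filter_upwards [hf z s hs, h3] with q h1 h2
  have e : f q.1 * h q.1 - f q.2 * h q.2 = (f q.1 - f q.2) * h q.1 + f q.2 * (h q.1 - h q.2) := by
    ring
  rw [e]
  refine (abs_add_le _ _).trans ?_
  rw [abs_mul, abs_mul, abs_of_nonneg (h0 q.1)]
  have ha : 0 ≤ a := (abs_nonneg _).trans (hfa z)
  have hn := norm_nonneg (q.1 - q.2)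
  calc |f q.1 - f q.2| * h q.1 + |f q.2| * |h q.1 - h q.2|
      ≤ ((w z + s) * ‖q.1 - q.2‖) * (h z + s) + a * (L * ‖q.1 - q.2‖) := by
        gcongr
        · exact h0 _
        · exact hfa _
        · exact hh _ _
    _ = ((w z + s) * (h z + s) + a * L) * ‖q.1 - q.2‖ := by ring
    _ ≤ (w z * h z + a * L + η) * ‖q.1 - q.2‖ := by
        refine mul_le_mul_of_nonneg_right ?_ hn
        have hs3 : s * s ≤ s * 1 := by gcongr
        have e1 : (w z + s) * (h z + s) = w z * h z + s * (w z + h z) + s * s := by ring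
        have e2 : s * (w z + h z + 1) = s * (w z + h z) + s * 1 := by ring
        linarith

end LL

variable {X : Type*} [NormedAddCommGroup X] [InnerProductSpace ℝ X] {F : Type*}
  [NormedAddCommGroup F] [NormedSpace ℝ F] {δ : X → F}

theorem SmoothPair.locLip {f : X → ℝ} {G : X → X} (h : SmoothPair f G) :
    LocLip f (fun x => ‖G x‖) := by
  intro z η hη
  have hc := h.continuous_grad
  have h1 : ∀ᶠ x in 𝓝 z, ‖G x‖ < ‖G z‖ + η :=
    (hc.norm.tendsto z).eventually_lt_const (lt_add_of_pos_right _ hη)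
  obtain ⟨r, hr, hb⟩ := Metric.eventually_nhds_iff_ball.1 h1
  have h2 : ball z r ×ˢ ball z r ∈ 𝓝 (z, z) := prod_mem_nhds (ball_mem_nhds z hr) (ball_mem_nhds z hr)
  filter_upwards [h2] with q hq
  have := Convex.norm_image_sub_le_of_norm_hasFDerivWithin_le (s := ball z r) (C := ‖G z‖ + η)
    (fun x _ => (h.hd x).hasFDerivWithinAt) (fun x hx => by
      rw [innerSL_apply_norm]; exact (hb x hx).le) (convex_ball z r) hq.2 hq.1
  rwa [Real.norm_eq_abs] at this

/-- truncation -/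
def clampR (a t : ℝ) : ℝ := max (-a) (min a t)

theorem clampR_abs {a : ℝ} (ha : 0 ≤ a) (t : ℝ) : |clampR a t| ≤ a := by
  unfold clampR
  rw [abs_le]
  exact ⟨le_max_left _ _, max_le (by linarith) (min_le_left _ _)⟩

theorem clampR_eq {a t : ℝ} (h : |t| ≤ a) : clampR a t = t := by
  rw [abs_le] at h
  unfold clampR
  rw [min_eq_right h.2, max_eq_right h.1]

theorem clampR_mono {a s t : ℝ} (h : s ≤ t) : clampR a s ≤ clampR a t := by
  unfold clampR
  gcongr

theorem clampR_le {a s t : ℝ} (h : s ≤ t) : clampR a t - clampR a s ≤ t - s := by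
  unfold clampR
  rcases max_cases (-a) (min a t) with h1 | h1 <;> rcases max_cases (-a) (min a s) with h2 | h2 <;>
  rcases min_cases a t with h3 | h3 <;> rcases min_cases a s with h4 | h4 <;> linarith

theorem clampR_lip (a s t : ℝ) : |clampR a s - clampR a t| ≤ |s - t| := by
  rcases le_total s t with h | h
  · have := clampR_mono (a := a) h
    have := clampR_le (a := a) h
    rw [abs_of_nonpos (by linarith), abs_of_nonpos (by linarith)]; linarith
  · have := clampR_mono (a := a) h
    have := clampR_le (a := a) h
    rw [abs_of_nonneg (by linarith), abs_of_nonneg (by linarith)]; linarith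

theorem clampR_colip (a s t : ℝ) : |(s - clampR a s) - (t - clampR a t)| ≤ |s - t| := by
  rcases le_total s t with h | h
  · have := clampR_mono (a := a) h
    have := clampR_le (a := a) h
    rw [abs_of_nonpos (by linarith), abs_of_nonpos (by linarith)]; linarith
  · have := clampR_mono (a := a) h
    have := clampR_le (a := a) h
    rw [abs_of_nonneg (by linarith), abs_of_nonneg (by linarith)]; linarith

/-- admissible weights in the induction -/
def GoodH (U : Ultrafilter ℕ) (ν : ℕ → (X → ℝ) → ℝ) (τ : ℝ) (h : X → ℝ) : Prop :=
  (∀ z, 0 ≤ h z) ∧ (∀ z, h z ≤ 1) ∧ (∃ L : ℝ, 0 ≤ L ∧ ∀ p q, |h p - h q| ≤ L * ‖p - q‖) ∧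
    ∃ κ < τ, ∀ᶠ k in (U : Filter ℕ), ν k (fun z => 1 - h z) ≤ κ

theorem induct_step {M θ τ : ℝ} (hM : 0 < M) (U : Ultrafilter ℕ)
    (hU : ∀ a : ℕ, ∀ᶠ k in (U : Filter ℕ), a ≤ k)
    (hτ : 0 < τ) (hθ : θ = 36 * τ) {Γ : Set F} (hΓ : IsVStarSet Γ)
    (φ : ℕ → F →L[ℝ] ℝ) (x x' : ℕ → F) (P : ℕ → Finset X) (ν : ℕ → (X → ℝ) → ℝ)
    (hδ : IsLipschitzFree (0 : X) δ) (hxΓ : ∀ k, x k ∈ Γ)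
    (hφ : ∀ i, ‖φ i‖ ≤ 1) (h1 : ∀ i k, i ≤ k → θ ≤ φ i (x k)) (h2 : ∀ i k, k < i → φ i (x k) = 0)
    (hx : ∀ k, ‖x k - x' k‖ ≤ τ) (hr : ∀ k, FreeRep δ M (x' k) (P k) (ν k))
    (h : X → ℝ) (hh : GoodH U ν τ h) (ε : ℝ) (hε : 0 < ε) :
    ∃ h' : X → ℝ, GoodH U ν τ h' ∧ (∀ z, h' z ≤ h z) ∧ ∃ g : F →L[ℝ] ℝ,
      LocLip (fun z => g (δ z)) (fun z => h z - h' z + ε) ∧ ∃ k, θ / 4 ≤ g (x k) := by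
  classical
  -- reduce to small `ε`
  wlog hε2 : ε ≤ 1 ∧ ε * M ≤ τ generalizing ε
  · obtain ⟨h', hg, hle, g, hl, hk⟩ := this (min ε (min 1 (τ / M))) (by positivity)
      ⟨(min_le_right _ _).trans (min_le_left _ _), by
        have := (min_le_right ε (min 1 (τ / M))).trans (min_le_right _ _)
        rwa [le_div_iff₀ hM] at this⟩
    refine ⟨h', hg, hle, g, hl.mono_weight fun z => ?_, hk⟩
    have := min_le_left ε (min 1 (τ / M))
    linarith
  obtain ⟨hε1, hεM⟩ := hε2
  obtain ⟨hh0, hh1, ⟨L, hL, hhL⟩, κ, hκ, hev⟩ := hh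
  have hd : 0 < ε / (2 * (L + 1)) := by positivity
  set d := ε / (2 * (L + 1)) with hdd
  have hdL : 2 * d * L ≤ ε := by
    have : d * (2 * (L + 1)) = ε := by rw [hdd]; field_simp
    nlinarith
  obtain ⟨E, hE⟩ := free_tight hδ hΓ d τ hd hτ
  have hρ : 0 < (τ - κ) / 2 := by linarith
  set ρ := (τ - κ) / 2 with hρd
  have hs : 0 < ρ / (M + 1) := by positivity
  set s := ρ / (M + 1) with hsd
  have hsM : s * M ≤ ρ := by
    have : s * (M + 1) = ρ := by rw [hsd]; field_simp
    nlinarith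
  obtain ⟨f, G, hfG, hf0, hfE, hGev, k, hk, hψ⟩ := step_lemma U hU hτ φ x x' P ν hδ hφ h1 h2 hx hr E
    (min d (ρ * s)) (by positivity) _ hev
  have hGc : Continuous fun z => ‖G z‖ := hfG.continuous_grad.norm
  have hhc : Continuous h := (LipschitzWith.of_dist_le_mul (K := ⟨L, hL⟩) fun x y => by
    rw [dist_eq_norm, dist_eq_norm]; exact hhL x y).continuous
  have hf'l : LocLip (fun z => clampR (2 * d) (f z)) (fun z => ‖G z‖) :=
    hfG.locLip.mono_fun fun p q => clampR_lip _ _ _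
  have hf'a : ∀ z, |clampR (2 * d) (f z)| ≤ 2 * d := fun z => clampR_abs (by positivity) _
  have hgl : LocLip (fun z => clampR (2 * d) (f z) * h z) (fun z => ‖G z‖ * h z + ε) :=
    (hf'l.mul (fun z => norm_nonneg _) hL hf'a hhL hh0).mono_weight fun z => by linarith
  have hgl2 : LocLip (fun z => clampR (2 * d) (f z) * (1 - h z)) (fun z => (1 - h z) + ε) := by
    refine (hf'l.mul (h := fun z => 1 - h z) (fun z => norm_nonneg _) hL hf'a (fun p q => ?_)
      (fun z => by linarith [hh1 z])).mono_weight fun z => ?_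
    · have := hhL p q
      rw [abs_sub_comm] at this
      rwa [sub_sub_sub_cancel_left]
    · have e1 := hfG.bd z
      have e2 := hh1 z
      nlinarith
  have hc0 : clampR (2 * d) (f 0) = 0 := by
    rw [hf0]
    exact clampR_eq (by rw [abs_zero]; positivity)
  obtain ⟨φf, hφf1, hφf⟩ := free_lift hδ 1 zero_le_one f
    (fun p q => by rw [one_mul]; exact hfG.lip1 p q) hf0
  obtain ⟨φc, hφc1, hφc⟩ := free_lift hδ 1 zero_le_one (fun z => clampR (2 * d) (f z))
    (fun p q => by
      rw [one_mul]; exact (clampR_lip _ _ _).trans (hfG.lip1 p q)) hc0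
  obtain ⟨g, hg1, hg⟩ := free_lift hδ 2 zero_le_two (fun z => clampR (2 * d) (f z) * h z)
    (LocLip.lip (hgl.mono_weight fun z => by
      have e1 := hfG.bd z
      have e2 := hh1 z
      have e3 := hh0 z
      have e4 := norm_nonneg (G z)
      nlinarith)) (by rw [hc0, zero_mul])
  refine ⟨fun z => h z * (1 - ‖G z‖), ⟨fun z => ?_, fun z => ?_, ?_, κ + ρ, by linarith, ?_⟩, fun z => ?_, g, ?_,
    k, ?_⟩
  · exact mul_nonneg (hh0 z) (by linarith [hfG.bd z])
  · exact mul_le_one₀ (hh1 z) (by linarith [hfG.bd z]) (by linarith [norm_nonneg (G z)])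
  · obtain ⟨K, hK, hGK⟩ := hfG.lip
    refine ⟨L + K, by positivity, fun p q => ?_⟩
    have e : h p * (1 - ‖G p‖) - h q * (1 - ‖G q‖)
      = (h p - h q) * (1 - ‖G p‖) + h q * (‖G q‖ - ‖G p‖) := by ring
    rw [e]
    refine (abs_add_le _ _).trans ?_
    rw [abs_mul, abs_mul, add_mul]
    have e1 := hfG.bd p
    have e2 := norm_nonneg (G p)
    have e3 : |1 - ‖G p‖| ≤ 1 := by rw [abs_le]; constructor <;> linarith
    have e4 : |h q| ≤ 1 := by rw [abs_of_nonneg (hh0 q)]; exact hh1 q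
    have e5 : |‖G q‖ - ‖G p‖| ≤ K * ‖p - q‖ := by
      rw [abs_sub_comm]
      exact (abs_norm_sub_norm_le _ _).trans (hGK p q)
    have e6 := hhL p q
    have a1 := mul_le_of_le_one_right (abs_nonneg (h p - h q)) e3
    have a2 := mul_le_of_le_one_left (abs_nonneg (‖G q‖ - ‖G p‖)) e4
    linarith
  · filter_upwards [hev, hGev] with j hj1 hj2
    have hp := (hr j).1
    have hj2' := hj2.trans_le (min_le_right _ _)
    have c1 : Continuous fun z => (1 / (2 * s)) * ‖G z‖ ^ 2 := by fun_prop
    have c2 : Continuous fun z => ((1 / (2 * s)) * ‖G z‖ ^ 2) + (s / 2) * 1 := by fun_prop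
    have m1 : ν j (fun z => 1 - h z * (1 - ‖G z‖))
        ≤ ν j (fun z => (1 - h z) + (((1 / (2 * s)) * ‖G z‖ ^ 2) + (s / 2) * 1)) := by
      refine hp.mono _ _ (by fun_prop) (by fun_prop) fun z => ?_
      have b1 : ‖G z‖ ≤ ((1 / (2 * s)) * ‖G z‖ ^ 2) + (s / 2) * 1 := by
        have : 0 ≤ (1 / (2 * s)) * (‖G z‖ - s) ^ 2 := by positivity
        have e : (1 / (2 * s)) * (‖G z‖ - s) ^ 2
          = ((1 / (2 * s)) * ‖G z‖ ^ 2) + (s / 2) * 1 - ‖G z‖ := by field_simp; ring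
        linarith
      have b2 : h z * ‖G z‖ ≤ ‖G z‖ := mul_le_of_le_one_left (norm_nonneg _) (hh1 z)
      nlinarith
    rw [hp.add _ _ (by fun_prop) c2, hp.add _ _ c1 (by fun_prop), hp.smul _ _ (by fun_prop),
      hp.smul _ _ continuous_const] at m1
    have m2 : 1 / (2 * s) * ν j (fun z => ‖G z‖ ^ 2) ≤ 1 / (2 * s) * (ρ * s) := by gcongr
    have m3 : 1 / (2 * s) * (ρ * s) = ρ / 2 := by field_simp
    have m4 : s / 2 * ν j (fun _ => 1) ≤ s / 2 * M := by gcongr; exact hp.one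
    linarith
  · exact mul_le_of_le_one_right (hh0 z) (by linarith [norm_nonneg (G z)])
  · simp only [hg]
    exact hgl.mono_weight fun z => le_of_eq (by ring)
  · have t1 := hψ φf hφf
    have hxx : ∀ ψ : F →L[ℝ] ℝ, |ψ (x k) - ψ (x' k)| ≤ ‖ψ‖ * τ := fun ψ => by
      rw [← map_sub, ← Real.norm_eq_abs]
      exact (ψ.le_opNorm _).trans (mul_le_mul_of_nonneg_left (hx k) (norm_nonneg _))
    have t2 := hE (φf - φc) (by
      apply free_norm_le hδ _ _ zero_le_one
      intro p q
      simp only [_root_.sub_apply, hφf, hφc]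
      rw [one_mul]
      exact (clampR_colip _ _ _).trans (hfG.lip1 p q)) (by
      intro z hz
      simp only [_root_.sub_apply, hφf, hφc]
      obtain ⟨e, he, hze⟩ := (infDist_lt_iff (insert_nonempty _ _)).1 hz
      have h3 : |f e| ≤ d := by
        rcases he with rfl | he
        · rw [hf0, abs_zero]; exact hd.le
        · exact (hfE e he).trans (min_le_left _ _)
      have h4 := hfG.lip1 z e
      rw [dist_eq_norm] at hze
      rw [clampR_eq, sub_self]
      have h5 := abs_sub_abs_le_abs_sub (f z) (f e)
      linarith) (x k) (hxΓ k)
    have t3 := (hr k).2.1 (φc - g) (fun z => (1 - h z) + ε * 1) (by fun_prop) (by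
      simp only [_root_.sub_apply, hφc, hg, mul_one]
      refine hgl2.mono_fun fun p q => le_of_eq ?_
      congr 1; ring)
    have hp := (hr k).1
    rw [hp.add _ _ (by fun_prop) (by fun_prop), hp.smul _ _ continuous_const] at t3
    have t4 : ε * ν k (fun _ => 1) ≤ ε * M := by gcongr; exact hp.one
    have t5 := hxx φf
    have t6 := hxx φc
    have t7 := hxx g
    have u5 : ‖φf‖ * τ ≤ 1 * τ := by gcongr
    have u6 : ‖φc‖ * τ ≤ 1 * τ := by gcongr
    have u7 : ‖g‖ * τ ≤ 2 * τ := by gcongr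
    simp only [_root_.sub_apply] at t2 t3
    rw [abs_le] at t2 t3 t5 t6 t7
    linarith [t2.1, t2.2, t3.1, t3.2, t5.1, t5.2, t6.1, t6.2, t7.1, t7.2]

theorem vstar_rwc [CompleteSpace F] (hδ : IsLipschitzFree (0 : X) δ) : HasPropertyVStar F := by
  intro Γ hΓ
  by_contra hnot
  obtain ⟨M, hM, hΓM⟩ := vstar_bounded hΓ
  obtain ⟨θ, hθ, φ, x, hxΓ, hφ, h1, h2⟩ := james_seq hΓM hnot
  have hτ : 0 < θ / 36 := by positivity
  choose x' P ν hx hr using fun k => rep_exists hδ hM (x k) (hΓM _ (hxΓ k)) (θ / 36) hτ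
  let U : Ultrafilter ℕ := hyperfilter ℕ
  have hU : ∀ a : ℕ, ∀ᶠ k in (U : Filter ℕ), a ≤ k := fun a =>
    Nat.hyperfilter_le_atTop (eventually_ge_atTop a)
  have hstep : ∀ (h : {h : X → ℝ // GoodH U ν (θ / 36) h}) (n : ℕ),
      ∃ h' : {h : X → ℝ // GoodH U ν (θ / 36) h}, (∀ z, h'.1 z ≤ h.1 z) ∧ ∃ g : F →L[ℝ] ℝ,
      LocLip (fun z => g (δ z)) (fun z => h.1 z - h'.1 z + (1 / 2) ^ (n + 1)) ∧
        ∃ k, θ / 4 ≤ g (x k) := by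
    intro h n
    obtain ⟨h', hg', r⟩ := induct_step hM U hU hτ (by ring) hΓ φ x x' P ν hδ hxΓ hφ h1 h2 hx hr h.1 h.2
      ((1 / 2) ^ (n + 1)) (by positivity)
    exact ⟨⟨h', hg'⟩, r⟩
  choose nx hle g hg k hk using hstep
  have h0 : GoodH U ν (θ / 36) (fun _ : X => 1) := by
    refine ⟨fun _ => zero_le_one, fun _ => le_rfl, ⟨0, le_rfl, by simp⟩, 0, hτ,
      Eventually.of_forall fun k => ?_⟩
    have := (hr k).1.smul 0 (fun _ => 1) continuous_const
    simp only [zero_mul] at this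
    simp [this]
  let H : ℕ → {h : X → ℝ // GoodH U ν (θ / 36) h} := fun n =>
    Nat.rec ⟨fun _ => 1, h0⟩ (fun n h => nx h n) n
  have hH : ∀ n, H (n + 1) = nx (H n) n := fun n => rfl
  have hw : IsWUC (fun n => g (H n) n) := by
    apply free_wuc hδ _ 2 zero_le_two
    intro s p q
    let c : ℕ → ℝ := fun n => SignType.sign (g (H n) n (δ p) - g (H n) n (δ q))
    have hc : ∀ n, |c n| ≤ 1 := by
      intro n
      simp only [c]
      rcases lt_trichotomy (g (H n) n (δ p) - g (H n) n (δ q)) 0 with h | h | h <;> simp [h]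
    have hl := LocLip.sum s c hc (fun n z => g (H n) n (δ z))
      (fun n z => (H n).1 z - (H (n + 1)).1 z + (1 / 2) ^ (n + 1)) (fun n => by
        rw [hH]; exact hg (H n) n)
    have hnn : ∀ n z, 0 ≤ (H n).1 z - (H (n + 1)).1 z + (1 / 2) ^ (n + 1) := by
      intro n z
      have e1 : (H (n + 1)).1 z ≤ (H n).1 z := hle (H n) n z
      have e2 : (0:ℝ) ≤ (1 / 2) ^ (n + 1) := by positivity
      linarith
    have htel : ∀ N z, ∑ n ∈ Finset.range N, ((H n).1 z - (H (n + 1)).1 z + (1 / 2) ^ (n + 1))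
        = 1 - (H N).1 z + (1 - (1 / 2) ^ N) := by
      intro N z
      induction N with
      | zero => simp [H]
      | succ N ih =>
        rw [Finset.sum_range_succ, ih]; ring
    obtain ⟨N, hN⟩ := s.exists_nat_subset_range
    have hl2 := LocLip.lip (C := 2) (hl.mono_weight fun z => by
      refine (Finset.sum_le_sum_of_subset_of_nonneg hN fun n _ _ => hnn n z).trans ?_
      rw [htel]
      have e1 := (H N).2.1 z
      have e2 : (0:ℝ) ≤ (1 / 2) ^ N := by positivity
      linarith) p q
    refine le_trans (le_of_eq ?_) ((le_abs_self _).trans hl2)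
    rw [← Finset.sum_sub_distrib]
    refine Finset.sum_congr rfl fun n _ => ?_
    rw [← mul_sub]
    exact (sign_mul_self _).symm
  obtain ⟨n, hn⟩ := (hΓ _ hw (θ / 8) (by positivity)).exists
  have e1 := hn (x (k (H n) n)) (hxΓ _)
  have e2 := hk (H n) n
  have e3 := le_abs_self (g (H n) n (x (k (H n) n)))
  linarith

end Final

/-- If `X` is a real Hilbert space, regarded as a pointed metric space with the norm
metric and base point `0`, then the Lipschitz-free space `F(X)` has property (V*). -/
theorem propertyVStar_lipschitzFree_hilbert
    {X : Type*} [NormedAddCommGroup X] [InnerProductSpace ℝ X] [CompleteSpace X]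
    {F : Type*} [NormedAddCommGroup F] [NormedSpace ℝ F] [CompleteSpace F]
    (δ : X → F) (hδ : IsLipschitzFree (0 : X) δ) :
    HasPropertyVStar F := by
  exact vstar_rwc hδ
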